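/- arXiv:2208.13180 — 2 statements merged into one kernel-verified Lean document; each statement's English description precedes it below -/
import Mathlib

section
/- Every gentle algebra A = kQ/I is Gorenstein: the injective dimension of A as a left A-module and the injective dimension of A as a right A-module are both finite (and equal). -/
open MulOpposite DirectSum

set_option autoImplicit false

/-- The combinatorial data of a finite quiver together with a set of
length-two relations (`rel a b` means that the length-two path `a·b` lies in
the admissible ideal `I`). -/
structure GentleData : Type 1 where
  V : Type
  A : Type
  [fintypeV : Fintype V]
  [fintypeA : Fintype A]
  [decEqV : DecidableEq V]
  [decEqA : DecidableEq A]
  src : A → V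
  tgt : A → V
  rel : A → A → Prop

attribute [instance] GentleData.fintypeV GentleData.fintypeA GentleData.decEqV GentleData.decEqA

/-- The gentleness conditions on a bound quiver `(Q, I)`:
relations are composable length-two paths; at most two arrows start
(resp. end) at every vertex; for every arrow `β` there is at most one arrow `α`
with `αβ ∉ I` and at most one with `αβ ∈ I`, and dually; and there is a bound
on the length of paths avoiding relations (admissibility). -/
def IsGentle (Q : GentleData) : Prop :=
  (∀ a b, Q.rel a b → Q.tgt a = Q.src b) ∧
  (∀ v : Q.V, Set.ncard {a : Q.A | Q.src a = v} ≤ 2) ∧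
  (∀ v : Q.V, Set.ncard {a : Q.A | Q.tgt a = v} ≤ 2) ∧
  (∀ b : Q.A, Set.ncard {a : Q.A | Q.tgt a = Q.src b ∧ ¬ Q.rel a b} ≤ 1) ∧
  (∀ b : Q.A, Set.ncard {a : Q.A | Q.tgt a = Q.src b ∧ Q.rel a b} ≤ 1) ∧
  (∀ a : Q.A, Set.ncard {b : Q.A | Q.src b = Q.tgt a ∧ ¬ Q.rel a b} ≤ 1) ∧
  (∀ a : Q.A, Set.ncard {b : Q.A | Q.src b = Q.tgt a ∧ Q.rel a b} ≤ 1) ∧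
  (∃ N : ℕ, ∀ p : ℕ → Q.A, ¬ ∀ i, i < N → (Q.tgt (p i) = Q.src (p (i+1)) ∧ ¬ Q.rel (p i) (p (i+1))))

/-- Generators of the path algebra: one generator for each vertex (the
corresponding trivial path) and one for each arrow. -/
inductive GenSym (Q : GentleData) : Type
  | vertex : Q.V → GenSym Q
  | arrow : Q.A → GenSym Q

/-- The defining relations of the algebra `kQ/I`: the trivial paths are
orthogonal idempotents summing to `1`, arrows are compatible with the trivial
paths at their source and target, and the chosen length-two paths vanish. -/
inductive GentleRel (k : Type) [Field k] (Q : GentleData) :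
    FreeAlgebra k (GenSym Q) → FreeAlgebra k (GenSym Q) → Prop
  | idem (v : Q.V) : GentleRel k Q
      (FreeAlgebra.ι k (GenSym.vertex v) * FreeAlgebra.ι k (GenSym.vertex v))
      (FreeAlgebra.ι k (GenSym.vertex v))
  | orth (v w : Q.V) (h : v ≠ w) : GentleRel k Q
      (FreeAlgebra.ι k (GenSym.vertex v) * FreeAlgebra.ι k (GenSym.vertex w)) 0
  | sum_idem : GentleRel k Q (∑ v : Q.V, FreeAlgebra.ι k (GenSym.vertex v)) 1
  | src_mul (a : Q.A) : GentleRel k Q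
      (FreeAlgebra.ι k (GenSym.vertex (Q.src a)) * FreeAlgebra.ι k (GenSym.arrow a))
      (FreeAlgebra.ι k (GenSym.arrow a))
  | mul_tgt (a : Q.A) : GentleRel k Q
      (FreeAlgebra.ι k (GenSym.arrow a) * FreeAlgebra.ι k (GenSym.vertex (Q.tgt a)))
      (FreeAlgebra.ι k (GenSym.arrow a))
  | relation (a b : Q.A) (h : Q.rel a b) : GentleRel k Q
      (FreeAlgebra.ι k (GenSym.arrow a) * FreeAlgebra.ι k (GenSym.arrow b)) 0

/-- The algebra `A = kQ/I` presented by the bound quiver `Q`. -/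
abbrev GentleAlgebra (k : Type) [Field k] (Q : GentleData) : Type :=
  RingQuot (GentleRel k Q)

/-- The image in `kQ/I` of a generator. -/
noncomputable def ofGen (k : Type) [Field k] (Q : GentleData) (x : GenSym Q) :
    GentleAlgebra k Q :=
  RingQuot.mkAlgHom k (GentleRel k Q) (FreeAlgebra.ι k x)

/-- The idempotent `e_v ∈ kQ/I` of a vertex `v`. -/
noncomputable def idemOf (k : Type) [Field k] (Q : GentleData) (v : Q.V) :
    GentleAlgebra k Q :=
  ofGen k Q (GenSym.vertex v)

/-- The element of `kQ/I` given by an arrow `a`. -/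
noncomputable def arrOf (k : Type) [Field k] (Q : GentleData) (a : Q.A) :
    GentleAlgebra k Q :=
  ofGen k Q (GenSym.arrow a)

/-- The indecomposable projective right module `e_v A`, as a right submodule
(i.e. `Aᵐᵒᵖ`-submodule) of `A`. -/
noncomputable def vertexModule (k : Type) [Field k] (Q : GentleData) (v : Q.V) :
    Submodule (GentleAlgebra k Q)ᵐᵒᵖ (GentleAlgebra k Q) :=
  Submodule.span (GentleAlgebra k Q)ᵐᵒᵖ {idemOf k Q v}

/-- The right module `αA` generated by an arrow `α`, as a right submodule of `A`. -/
noncomputable def arrowModule (k : Type) [Field k] (Q : GentleData) (a : Q.A) :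
    Submodule (GentleAlgebra k Q)ᵐᵒᵖ (GentleAlgebra k Q) :=
  Submodule.span (GentleAlgebra k Q)ᵐᵒᵖ {arrOf k Q a}

/-- An oriented cycle `c` of length `ℓ` with full relations:
`t(cᵢ) = s(cᵢ₊₁)` and `cᵢ cᵢ₊₁ ∈ I` for all `i` (indices modulo `ℓ`). -/
def IsOCFCycle (Q : GentleData) {ℓ : ℕ} (c : ZMod ℓ → Q.A) : Prop :=
  ∀ i : ZMod ℓ, Q.tgt (c i) = Q.src (c (i + 1)) ∧ Q.rel (c i) (c (i + 1))

/-- The arrow `a` lies on some oriented cycle with full relations. -/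
def OnOCFCycle (Q : GentleData) (a : Q.A) : Prop :=
  ∃ ℓ : ℕ, 1 ≤ ℓ ∧ ∃ c : ZMod ℓ → Q.A, IsOCFCycle Q c ∧ ∃ i : ZMod ℓ, c i = a

/-- The whole quiver `(Q, I)` is an oriented cycle of some length `ℓ ≥ 1` with
full relations. -/
def QuiverIsOCF (Q : GentleData) : Prop :=
  ∃ ℓ : ℕ, 1 ≤ ℓ ∧ ∃ (e : Q.V ≃ ZMod ℓ) (f : Q.A ≃ ZMod ℓ),
    (∀ a, e (Q.src a) = f a) ∧ (∀ a, e (Q.tgt a) = f a + 1) ∧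
    (∀ a b, Q.rel a b ↔ f b = f a + 1)

/-- The quiver `(Q, I)` is a single point: exactly one vertex and no arrows. -/
def QuiverIsPoint (Q : GentleData) : Prop :=
  (∃ v : Q.V, ∀ w : Q.V, w = v) ∧ IsEmpty Q.A

/-- `v` is a common vertex of two distinct oriented cycles with full relations. -/
def TwoCyclesAt (Q : GentleData) (v : Q.V) : Prop :=
  ∃ (ℓ ℓ' : ℕ), 1 ≤ ℓ ∧ 1 ≤ ℓ' ∧ ∃ (c : ZMod ℓ → Q.A) (c' : ZMod ℓ' → Q.A),
    IsOCFCycle Q c ∧ IsOCFCycle Q c' ∧ Function.Injective c ∧ Function.Injective c' ∧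
    (∃ i, Q.tgt (c i) = v) ∧ (∃ j, Q.tgt (c' j) = v) ∧ Set.range c ≠ Set.range c'

/-- The set of vertices lying on an oriented cycle with full relations. -/
def ocfVertexSet (Q : GentleData) : Set Q.V :=
  {v | ∃ a : Q.A, OnOCFCycle Q a ∧ Q.tgt a = v}

/-- Oriented cycles with full relations, identified up to cyclic rotation. -/
def ocfCycleSetoid (Q : GentleData) (ℓ : ℕ) :
    Setoid {c : ZMod ℓ → Q.A // IsOCFCycle Q c ∧ Function.Injective c} where
  r c c' := ∃ t : ZMod ℓ, ∀ i, c'.1 i = c.1 (i + t)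
  iseqv := by
    refine ⟨fun c => ⟨0, fun i => by rw [add_zero]⟩, ?_, ?_⟩
    · rintro c c' ⟨t, ht⟩
      exact ⟨-t, fun i => by rw [ht (i + -t), neg_add_cancel_right]⟩
    · rintro a b c ⟨t, ht⟩ ⟨s, hs⟩
      exact ⟨s + t, fun i => by rw [hs i, ht (i + s), add_assoc]⟩

/-- `AGzero Q ℓ` is the value `φ_A(0, ℓ)` of the AG-invariant: the number of
oriented cycles of length `ℓ` with full relations, counted up to rotation. -/
noncomputable def AGzero (Q : GentleData) (ℓ : ℕ) : ℕ :=
  Nat.card (Quotient (ocfCycleSetoid Q ℓ))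

/-- A (nontrivial) forbidden path with arrows `p 0, …, p (m-1)`:
all consecutive length-two subpaths lie in `I`. -/
def IsForbiddenPath (Q : GentleData) (m : ℕ) (p : ℕ → Q.A) : Prop :=
  ∀ i : ℕ, i + 1 < m → Q.tgt (p i) = Q.src (p (i + 1)) ∧ Q.rel (p i) (p (i + 1))

/-- A (nontrivial) forbidden thread: a maximal forbidden path (of `m ≥ 1`
arrows), i.e. one which cannot be extended on either side. -/
def IsForbiddenThread (Q : GentleData) (m : ℕ) (p : ℕ → Q.A) : Prop :=
  1 ≤ m ∧ IsForbiddenPath Q m p ∧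
  (∀ b : Q.A, Q.tgt b = Q.src (p 0) → ¬ Q.rel b (p 0)) ∧
  (∀ b : Q.A, Q.src b = Q.tgt (p (m - 1)) → ¬ Q.rel (p (m - 1)) b)

/-- A trivial forbidden thread at a vertex `v` (of length `0`). -/
def IsTrivialForbiddenThread (Q : GentleData) (v : Q.V) : Prop :=
  ({a : Q.A | Q.tgt a = v} = ∅) ∨ ({a : Q.A | Q.src a = v} = ∅) ∨
  (∃ b b' : Q.A, {a : Q.A | Q.tgt a = v} = {b} ∧ {a : Q.A | Q.src a = v} = {b'} ∧ ¬ Q.rel b b')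

/-- The set of lengths of the forbidden threads of finite length. -/
def finiteForbiddenThreadLengths (Q : GentleData) : Set ℕ∞ :=
  {n : ℕ∞ | (n = 0 ∧ ∃ v : Q.V, IsTrivialForbiddenThread Q v) ∨
    (∃ m : ℕ, n = (m : ℕ∞) ∧ ∃ p : ℕ → Q.A, IsForbiddenThread Q m p)}

/-- The set of lengths of all forbidden threads; an oriented cycle with full
relations gives rise to a forbidden thread of infinite length. -/
def forbiddenThreadLengths (Q : GentleData) : Set ℕ∞ :=
  finiteForbiddenThreadLengths Q ∪
    {n : ℕ∞ | n = ⊤ ∧ ∃ ℓ : ℕ, 1 ≤ ℓ ∧ ∃ c : ZMod ℓ → Q.A, IsOCFCycle Q c}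

section Dimensions

/-- `projDimLE R n M` : the `R`-module `M` admits a projective resolution of
length at most `n`. -/
def projDimLE (R : Type) [Ring R] (n : ℕ) (M : Type) [AddCommGroup M] [Module R M] : Prop :=
  ∃ (P : ℕ → ModuleCat.{0} R) (d : ∀ i : ℕ, ↥(P (i + 1)) →ₗ[R] ↥(P i)) (ε : ↥(P 0) →ₗ[R] M),
    (∀ i, Module.Projective R ↥(P i)) ∧
    Function.Surjective ε ∧ Function.Exact (d 0) ε ∧
    (∀ i, Function.Exact (d (i + 1)) (d i)) ∧
    (∀ i, n ≤ i → Subsingleton ↥(P (i + 1)))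

/-- `injDimLE R n M` : the `R`-module `M` admits an injective coresolution of
length at most `n`. -/
def injDimLE (R : Type) [Ring R] (n : ℕ) (M : Type) [AddCommGroup M] [Module R M] : Prop :=
  ∃ (E : ℕ → ModuleCat.{0} R) (d : ∀ i : ℕ, ↥(E i) →ₗ[R] ↥(E (i + 1))) (ι : M →ₗ[R] ↥(E 0)),
    (∀ i, Module.Injective R ↥(E i)) ∧
    Function.Injective ι ∧ Function.Exact ι (d 0) ∧
    (∀ i, Function.Exact (d i) (d (i + 1))) ∧
    (∀ i, n ≤ i → Subsingleton ↥(E (i + 1)))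

/-- The projective dimension of a module, in `ℕ∞`. -/
noncomputable def projDim (R : Type) [Ring R] (M : Type) [AddCommGroup M] [Module R M] : ℕ∞ :=
  sInf {n : ℕ∞ | ∃ m : ℕ, n = (m : ℕ∞) ∧ projDimLE R m M}

/-- The injective dimension of a module, in `ℕ∞`. -/
noncomputable def injDim (R : Type) [Ring R] (M : Type) [AddCommGroup M] [Module R M] : ℕ∞ :=
  sInf {n : ℕ∞ | ∃ m : ℕ, n = (m : ℕ∞) ∧ injDimLE R m M}

/-- The global dimension of a ring: the supremum of the projective dimensions
of all finitely generated modules. -/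
noncomputable def globalDim (R : Type) [Ring R] : ℕ∞ :=
  ⨆ (M : ModuleCat.{0} R) (_ : Module.Finite R ↥M), projDim R ↥M

/-- The left self-injective dimension: the injective dimension of `R` as a
left module over itself. -/
noncomputable def leftSelfInjDim (R : Type) [Ring R] : ℕ∞ := injDim R R

/-- The right self-injective dimension: the injective dimension of `R` as a
right module over itself. -/
noncomputable def rightSelfInjDim (R : Type) [Ring R] : ℕ∞ := injDim Rᵐᵒᵖ R

end Dimensions

section Radical

/-- The radical of a module: the intersection of its maximal submodules. -/
def radMod (R : Type) [Ring R] (M : Type) [AddCommGroup M] [Module R M] : Submodule R M :=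
  sInf {N : Submodule R M | IsCoatom N}

/-- The top of a module: the quotient by its radical. -/
abbrev topMod (R : Type) [Ring R] (M : Type) [AddCommGroup M] [Module R M] : Type :=
  M ⧸ radMod R M

/-- The socle of a module: the sum of its simple submodules. -/
def socMod (R : Type) [Ring R] (M : Type) [AddCommGroup M] [Module R M] : Submodule R M :=
  sSup {N : Submodule R M | IsAtom N}

/-- The simple right `A`-module `S(v)` at a vertex `v`, realized as the top of
the indecomposable projective `e_v A`. -/
noncomputable abbrev SimpleAt (k : Type) [Field k] (Q : GentleData) (v : Q.V) : Type :=
  topMod (GentleAlgebra k Q)ᵐᵒᵖ ↥(vertexModule k Q v)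

end Radical

section Gorenstein

/-- An indecomposable module: nontrivial, and admitting no nontrivial direct
sum decomposition. -/
def IndecomposableModule (R : Type) [Ring R] (M : Type) [AddCommGroup M] [Module R M] : Prop :=
  Nontrivial M ∧ ∀ N N' : Submodule R M, IsCompl N N' → N = ⊥ ∨ N' = ⊥

/-- A Gorenstein projective module: a syzygy of an acyclic complex of
projective modules which remains acyclic after applying `Hom(−, R)`. -/
def IsGorensteinProjective (R : Type) [Ring R] (G : Type) [AddCommGroup G] [Module R G] :
    Prop :=
  ∃ (P : ℤ → ModuleCat.{0} R) (d : ∀ n : ℤ, ↥(P n) →ₗ[R] ↥(P (n + 1))),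
    (∀ n, Module.Projective R ↥(P n)) ∧
    (∀ n, Function.Exact (d n) (d (n + 1))) ∧
    (∀ n : ℤ, Function.Exact
      (fun g : ↥(P (n + 1 + 1)) →ₗ[R] R => g ∘ₗ d (n + 1))
      (fun g : ↥(P (n + 1)) →ₗ[R] R => g ∘ₗ d n)) ∧
    Nonempty (G ≃ₗ[R] ↥(LinearMap.range (d (-1))))

/-- An indecomposable non-projective Gorenstein projective module. -/
def IsIndecNonProjGP (R : Type) [Ring R] (M : Type) [AddCommGroup M] [Module R M] : Prop :=
  IndecomposableModule R M ∧ IsGorensteinProjective R M ∧ ¬ Module.Projective R M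

/-- An indecomposable Gorenstein projective module. -/
def IsIndecGP (R : Type) [Ring R] (M : Type) [AddCommGroup M] [Module R M] : Prop :=
  IndecomposableModule R M ∧ IsGorensteinProjective R M

/-- Indecomposable non-projective Gorenstein projective right `A`-modules
(realized as right submodules of `A`), up to isomorphism. -/
noncomputable def npgpSetoid (k : Type) [Field k] (Q : GentleData) :
    Setoid {N : Submodule (GentleAlgebra k Q)ᵐᵒᵖ (GentleAlgebra k Q) //
      IsIndecNonProjGP (GentleAlgebra k Q)ᵐᵒᵖ ↥N} where
  r N N' := Nonempty (↥N.1 ≃ₗ[(GentleAlgebra k Q)ᵐᵒᵖ] ↥N'.1)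
  iseqv := ⟨fun _ => ⟨LinearEquiv.refl _ _⟩, fun ⟨e⟩ => ⟨e.symm⟩, fun ⟨e⟩ ⟨f⟩ => ⟨e.trans f⟩⟩

/-- The number of isomorphism classes of indecomposable non-projective
Gorenstein projective right `A`-modules. -/
noncomputable def numIndecNonProjGP (k : Type) [Field k] (Q : GentleData) : ℕ :=
  Nat.card (Quotient (npgpSetoid k Q))

/-- Indecomposable Gorenstein projective right `A`-modules (realized as right
submodules of `A`), up to isomorphism. -/
noncomputable def gpSetoid (k : Type) [Field k] (Q : GentleData) :
    Setoid {N : Submodule (GentleAlgebra k Q)ᵐᵒᵖ (GentleAlgebra k Q) //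
      IsIndecGP (GentleAlgebra k Q)ᵐᵒᵖ ↥N} where
  r N N' := Nonempty (↥N.1 ≃ₗ[(GentleAlgebra k Q)ᵐᵒᵖ] ↥N'.1)
  iseqv := ⟨fun _ => ⟨LinearEquiv.refl _ _⟩, fun ⟨e⟩ => ⟨e.symm⟩, fun ⟨e⟩ ⟨f⟩ => ⟨e.trans f⟩⟩

end Gorenstein

section Strings

/-- A walk in the quiver: `len` letters, the `i`-th letter (for `1 ≤ i ≤ len`)
joining the vertex `vtx (i-1)` to `vtx i`; a letter `(a, true)` is the arrow
`a` read forwards (direct), and `(a, false)` is its formal inverse. -/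
structure StrWalk (Q : GentleData) : Type where
  len : ℕ
  vtx : ℕ → Q.V
  letter : ℕ → Q.A × Bool

/-- The walk is a string: letters join consecutive vertices, the walk is
reduced (no `a a⁻` nor `a⁻ a`), and it avoids the relations. -/
def IsString (Q : GentleData) (w : StrWalk Q) : Prop :=
  (∀ i : ℕ, 1 ≤ i → i ≤ w.len →
    ((w.letter i).2 = true →
      Q.src (w.letter i).1 = w.vtx (i - 1) ∧ Q.tgt (w.letter i).1 = w.vtx i) ∧
    ((w.letter i).2 = false →
      Q.tgt (w.letter i).1 = w.vtx (i - 1) ∧ Q.src (w.letter i).1 = w.vtx i)) ∧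
  (∀ i : ℕ, 1 ≤ i → i + 1 ≤ w.len →
    (¬ ((w.letter i).1 = (w.letter (i + 1)).1 ∧ (w.letter i).2 ≠ (w.letter (i + 1)).2)) ∧
    ((w.letter i).2 = true → (w.letter (i + 1)).2 = true →
      ¬ Q.rel (w.letter i).1 (w.letter (i + 1)).1) ∧
    ((w.letter i).2 = false → (w.letter (i + 1)).2 = false →
      ¬ Q.rel (w.letter (i + 1)).1 (w.letter i).1))

/-- `M` is the string module `M(w)` of the string `w`: it has a `k`-basis
indexed by the vertices `0, …, len` of the walk, the idempotent of a vertex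
fixes exactly the basis vectors sitting at that vertex, and an arrow moves
basis vectors along the corresponding letters of the walk. -/
def IsStringModule (k : Type) [Field k] (Q : GentleData) (w : StrWalk Q) (M : Type)
    [AddCommGroup M] [Module k M] [Module (GentleAlgebra k Q)ᵐᵒᵖ M] : Prop :=
  (∀ (c : k) (m : M), (algebraMap k (GentleAlgebra k Q)ᵐᵒᵖ c) • m = c • m) ∧
  ∃ b : ℕ → M,
    LinearIndependent k (fun i : Fin (w.len + 1) => b i) ∧
    Submodule.span k (b '' {i : ℕ | i ≤ w.len}) = ⊤ ∧
    (∀ i : ℕ, i ≤ w.len → ∀ v : Q.V,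
      (op (idemOf k Q v)) • b i = if w.vtx i = v then b i else 0) ∧
    (∀ i : ℕ, i ≤ w.len → ∀ a : Q.A,
      (op (arrOf k Q a)) • b i =
        (if i + 1 ≤ w.len ∧ w.letter (i + 1) = (a, true) then b (i + 1) else 0) +
        (if 1 ≤ i ∧ w.letter i = (a, false) then b (i - 1) else 0))

/-- The vertex at position `i` is a source of the walk: the adjacent letters
point away from it. -/
def sourceAt (Q : GentleData) (w : StrWalk Q) (i : ℕ) : Prop :=
  i ≤ w.len ∧ (i = 0 ∨ (w.letter i).2 = false) ∧ (i = w.len ∨ (w.letter (i + 1)).2 = true)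

/-- The vertex at position `i` is a sink of the walk: the adjacent letters
point towards it. -/
def sinkAt (Q : GentleData) (w : StrWalk Q) (i : ℕ) : Prop :=
  i ≤ w.len ∧ (i = 0 ∨ (w.letter i).2 = true) ∧ (i = w.len ∨ (w.letter (i + 1)).2 = false)

/-- Left maximality of the inverse prefix (letters `1, …, i`) of a walk of the
shape "inverse prefix followed by direct suffix": the underlying direct path
out of the vertex at position `i` cannot be prolonged (and, when the prefix is
trivial, no second arrow leaves the starting vertex). -/
def LeftMaxAt (Q : GentleData) (w : StrWalk Q) (i : ℕ) : Prop :=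
  if 1 ≤ i then ∀ α : Q.A, Q.src α = w.vtx 0 → Q.rel (w.letter 1).1 α
  else ∀ α : Q.A, Q.src α = w.vtx 0 → (1 ≤ w.len ∧ α = (w.letter 1).1)

/-- Right maximality of the direct suffix (letters `i+1, …, len`) of a walk of
the shape "inverse prefix followed by direct suffix". -/
def RightMaxAt (Q : GentleData) (w : StrWalk Q) (i : ℕ) : Prop :=
  if i < w.len then ∀ β : Q.A, Q.src β = w.vtx w.len → Q.rel (w.letter w.len).1 β
  else ∀ β : Q.A, Q.src β = w.vtx w.len → (1 ≤ w.len ∧ β = (w.letter w.len).1)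

end Strings



/-! ### Abstract description of the algebra -/

/-- The properties of `R = kQ/I` which are used in the proof. -/
structure GD (k : Type) [Field k] (Q : GentleData) (R : Type) [Ring R] [Algebra k R]
    (e : Q.V → R) (x : Q.A → R) : Prop where
  idem : ∀ v, e v * e v = e v
  orth : ∀ v w, v ≠ w → e v * e w = 0
  sum_e : ∑ v, e v = 1
  src_mul : ∀ a, e (Q.src a) * x a = x a
  mul_tgt : ∀ a, x a * e (Q.tgt a) = x a
  rel_zero : ∀ a b, Q.rel a b → x a * x b = 0
  ker_r : ∀ r : Q.A → R, ∑ a, x a * r a = 0 →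
    ∀ a, (∃ c b, Q.rel a c ∧ e (Q.tgt a) * r a = x c * b) ∨ e (Q.tgt a) * r a = 0
  ker_l : ∀ r : Q.A → R, ∑ a, r a * x a = 0 →
    ∀ a, (∃ c b, Q.rel c a ∧ r a * e (Q.src a) = b * x c) ∨ r a * e (Q.src a) = 0
  dec_l : ∀ r : R, ∃ (c : Q.V → k) (s : Q.A → R), r = ∑ v, c v • e v + ∑ a, s a * x a
  dec_r : ∀ r : R, ∃ (c : Q.V → k) (s : Q.A → R), r = ∑ v, c v • e v + ∑ a, x a * s a
  nil : ∃ n : ℕ, ∀ l : List Q.A, l.length = n → (l.map x).prod = 0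
  chi : ∀ v, ∃ f : R →ₐ[k] k, f (e v) = 1 ∧ ∀ a, f (x a) = 0
  fin : Module.Finite k R

/-- The first extension group with the module of an arrow vanishes. -/
def HCond (Q : GentleData) {R : Type} [Ring R] (e : Q.V → R) (x : Q.A → R)
    (N : Type) [AddCommGroup N] [Module R N] (b : Q.A) : Prop :=
  ∀ n : N, e (Q.src b) • n = n → (∀ c, Q.rel c b → x c • n = 0) → ∃ y : N, x b • y = n

/-- The first extension group with the top of the algebra vanishes. -/
def TopExt (Q : GentleData) {R : Type} [Ring R] (e : Q.V → R) (x : Q.A → R)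
    (N : Type) [AddCommGroup N] [Module R N] : Prop :=
  ∀ n : Q.A → N, (∀ a, e (Q.src a) • n a = n a) → (∀ a c, Q.rel c a → x c • n a = 0) →
    ∃ y : N, ∀ a, x a • y = n a

section abstractPart

variable {k : Type} [Field k] {Q : GentleData} {R : Type} [Ring R] [Algebra k R]
  {e : Q.V → R} {x : Q.A → R}

theorem GD.mul_ne (h : GD k Q R e x) (a : Q.A) (v : Q.V) (hv : Q.tgt a ≠ v) : x a * e v = 0 := by
  rw [← h.mul_tgt, mul_assoc, h.orth _ _ hv, mul_zero]

theorem GD.ne_mul (h : GD k Q R e x) (a : Q.A) (v : Q.V) (hv : v ≠ Q.src a) : e v * x a = 0 := by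
  rw [← h.src_mul, ← mul_assoc, h.orth _ _ hv, zero_mul]

theorem TopExt.hCond {N : Type} [AddCommGroup N] [Module R N] (hs : TopExt Q e x N) (b : Q.A) :
    HCond Q e x N b := by
  intro n hn hc
  obtain ⟨y, hy⟩ := hs (Pi.single b n) (by
      intro a
      by_cases hab : a = b
      · subst hab; simpa using hn
      · simp [Pi.single_eq_of_ne hab]) (by
      intro a c hac
      by_cases hab : a = b
      · subst hab; simpa using hc c hac
      · simp [Pi.single_eq_of_ne hab])
  exact ⟨y, by simpa using hy b⟩

theorem GD.star_of_injective (h : GD k Q R e x) {N : Type} [AddCommGroup N] [Module R N]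
    (hN : Module.Injective R N) : TopExt Q e x N := by
  intro n hn hc
  let φ : (Q.A → R) →ₗ[R] R := ∑ a, (LinearMap.toSpanSingleton R R (x a)) ∘ₗ LinearMap.proj a
  let ψ : (Q.A → R) →ₗ[R] N := ∑ a, (LinearMap.toSpanSingleton R N (n a)) ∘ₗ LinearMap.proj a
  have hφ : ∀ r, φ r = ∑ a, r a * x a := by intro r; simp [φ]
  have hψ : ∀ r, ψ r = ∑ a, r a • n a := by intro r; simp [ψ]
  have hker : LinearMap.ker φ ≤ LinearMap.ker ψ := by
    intro r hr
    rw [LinearMap.mem_ker, hφ] at hr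
    rw [LinearMap.mem_ker, hψ]
    refine Finset.sum_eq_zero fun a _ => ?_
    rw [← hn a, ← mul_smul]
    rcases h.ker_l r hr a with ⟨c, b, hca, hb⟩ | h0
    · rw [hb, mul_smul, hc a c hca, smul_zero]
    · rw [h0, zero_smul]
  obtain ⟨g, hg⟩ := hN.out ((LinearMap.ker φ).liftQ φ le_rfl)
    (by rw [← LinearMap.ker_eq_bot, Submodule.ker_liftQ_eq_bot _ _ _ le_rfl])
    ((LinearMap.ker φ).liftQ ψ hker)
  refine ⟨g 1, fun a => ?_⟩
  have := hg (Submodule.Quotient.mk (Pi.single a 1))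
  simp only [Submodule.liftQ_apply, hφ, hψ] at this
  rw [← map_smul, smul_eq_mul, mul_one]
  have h1 : ∑ a', (Pi.single a (1 : R) : Q.A → R) a' * x a' = x a := by
    rw [Finset.sum_eq_single a] <;> simp +contextual
  have h2 : ∑ a', (Pi.single a (1 : R) : Q.A → R) a' • n a' = n a := by
    rw [Finset.sum_eq_single a] <;> simp +contextual
  rw [h1, h2] at this
  exact this

theorem GD.exists_socle (h : GD k Q R e x) (I : Ideal R) (hI : I ≠ ⊤) :
    ∃ v, ∃ z, z ∉ I ∧ e v * z = z ∧ ∀ a, x a * z ∈ I := by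
  have h1 : ∃ z, z ∉ I ∧ ∀ a, x a * z ∈ I := by
    by_contra hcon
    push Not at hcon
    have key : ∀ m : ℕ, ∃ l : List Q.A, l.length = m ∧ (l.map x).prod ∉ I := by
      intro m
      induction m with
      | zero => exact ⟨[], rfl, by simpa using (Ideal.ne_top_iff_one I).1 hI⟩
      | succ m ih =>
        obtain ⟨l, hl, hp⟩ := ih
        obtain ⟨a, ha⟩ := hcon _ hp
        exact ⟨a :: l, by simp [hl], by simpa using ha⟩
    obtain ⟨m, hm⟩ := h.nil
    obtain ⟨l, hl, hp⟩ := key m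
    rw [hm l hl] at hp
    exact hp I.zero_mem
  obtain ⟨z, hz, hza⟩ := h1
  have h2 : ∃ v, e v * z ∉ I := by
    by_contra hcon
    push Not at hcon
    apply hz
    rw [← one_mul z, ← h.sum_e, Finset.sum_mul]
    exact I.sum_mem fun v _ => hcon v
  obtain ⟨v, hv⟩ := h2
  refine ⟨v, e v * z, hv, by rw [← mul_assoc, h.idem], fun a => ?_⟩
  by_cases hav : Q.tgt a = v
  · subst hav; rw [← mul_assoc, h.mul_tgt]; exact hza a
  · rw [← mul_assoc, h.mul_ne a v hav, zero_mul]; exact I.zero_mem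

theorem GD.injective_of_star (h : GD k Q R e x) {N : Type} [AddCommGroup N] [Module R N]
    (hs : TopExt Q e x N) : Module.Injective R N := by
  have hfin := h.fin
  have hnoeth : IsNoetherianRing R := IsNoetherianRing.of_finite k R
  apply Module.Baer.injective
  have main : ∀ I : Ideal R, ∀ g : I →ₗ[R] N, ∃ y : N, ∀ (r : R) (hr : r ∈ I), r • y = g ⟨r, hr⟩ := by
    intro I
    induction I using WellFoundedGT.induction with
    | ind I ih =>
    intro g
    by_cases hI : I = ⊤
    · subst hI
      refine ⟨g ⟨1, trivial⟩, fun r hr => ?_⟩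
      rw [← map_smul]
      congr 1
      ext; simp
    obtain ⟨v, z, hz, hvz, hza⟩ := h.exists_socle I hI
    -- the value at `z`
    obtain ⟨y0, hy0⟩ := hs (fun a => g ⟨x a * z, hza a⟩)
      (by
        intro a
        rw [← map_smul]
        congr 1
        ext
        simp [← mul_assoc, h.src_mul])
      (by
        intro a c hca
        rw [← map_smul, ← map_zero g]
        congr 1
        ext
        simp [← mul_assoc, h.rel_zero c a hca])
    have hy : ∀ a, x a • (e v • y0) = g ⟨x a * z, hza a⟩ := by
      intro a
      by_cases hav : Q.tgt a = v
      · subst hav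
        rw [← mul_smul, h.mul_tgt, hy0]
      · rw [← mul_smul, h.mul_ne a v hav, zero_smul, ← map_zero g]
        congr 1
        ext
        simp only [ZeroMemClass.coe_zero]
        rw [← hvz, ← mul_assoc, h.mul_ne a v hav, zero_mul]
    have hev : ∀ w, e w • (e v • y0) = if w = v then e v • y0 else 0 := by
      intro w
      split_ifs with hw
      · subst hw; rw [← mul_smul, h.idem]
      · rw [← mul_smul, h.orth _ _ hw, zero_smul]
    have hez : ∀ w, e w * z = if w = v then z else 0 := by
      intro w
      split_ifs with hw
      · subst hw; exact hvz
      · rw [← hvz, ← mul_assoc, h.orth _ _ hw, zero_mul]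
    generalize e v • y0 = y at hy hev
    have hwd : ∀ (r : R) (hr : r * z ∈ I), r • y = g ⟨r * z, hr⟩ := by
      intro r hr
      obtain ⟨c, s, hcs⟩ := h.dec_l r
      have hrz : r * z = c v • z + ∑ a, s a * (x a * z) := by
        rw [hcs, add_mul, Finset.sum_mul, Finset.sum_mul]
        congr 1
        · simp [hez]
        · simp [mul_assoc]
      have hJ : ∑ a, s a * (x a * z) ∈ I := I.sum_mem fun a _ => I.mul_mem_left _ (hza a)
      have hcv : c v = 0 := by
        by_contra hne
        apply hz
        have : c v • z ∈ I := by
          have := I.sub_mem hr hJ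
          rwa [hrz, add_sub_cancel_right] at this
        have h3 := I.mul_mem_left (algebraMap k R (c v)⁻¹) this
        rwa [← Algebra.smul_def, smul_smul, inv_mul_cancel₀ hne, one_smul] at h3
      have e1 : r • y = ∑ a, s a • (x a • y) := by
        rw [hcs, add_smul, Finset.sum_smul, Finset.sum_smul]
        have : ∑ w, (c w • e w) • y = 0 := by
          refine Finset.sum_eq_zero fun w _ => ?_
          rw [Algebra.smul_def, mul_smul, hev]
          split_ifs with hw
          · subst hw; rw [hcv, map_zero, zero_smul]
          · rw [smul_zero]
        rw [this, zero_add]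
        simp [mul_smul]
      rw [e1]
      simp_rw [hy, ← map_smul]
      rw [← map_sum]
      congr 1
      ext
      simp [hrz, hcv]
    let f1 : R →ₗ.[R] N := ⟨I, g⟩
    let f2 : R →ₗ.[R] N := LinearPMap.mkSpanSingleton' z y (by
      intro c hc
      rw [smul_eq_mul] at hc
      have : c * z ∈ I := by rw [hc]; exact I.zero_mem
      rw [RingHom.id_apply, hwd c this, ← map_zero g]
      congr 1
      ext; simpa using hc)
    have hag : ∀ (p : f1.domain) (q : f2.domain), (p : R) = q → f1 p = f2 q := by
      rintro ⟨p, hp⟩ ⟨q, hq⟩ (rfl : p = q)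
      obtain ⟨c, rfl⟩ := Submodule.mem_span_singleton.1 hq
      rw [LinearPMap.mkSpanSingleton'_apply, RingHom.id_apply, hwd c hp]
      rfl
    let f := f1.sup f2 hag
    have hlt : I < f.domain := by
      refine lt_of_le_of_ne (show I ≤ I ⊔ _ from le_sup_left) ?_
      intro heq
      apply hz
      rw [heq]
      have : R ∙ z ≤ f.domain := show R ∙ z ≤ I ⊔ R ∙ z from le_sup_right
      exact this (Submodule.mem_span_singleton_self z)
    obtain ⟨t, ht⟩ := ih f.domain hlt f.toFun
    refine ⟨t, fun r hr => ?_⟩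
    rw [ht r (hlt.le hr)]
    have := (LinearPMap.left_le_sup f1 f2 hag).2 (x := ⟨r, hr⟩) (y := ⟨r, hlt.le hr⟩) rfl
    exact this.symm
  intro I g
  obtain ⟨y, hy⟩ := main I g
  exact ⟨LinearMap.toSpanSingleton R N y, fun r hr => by simpa using hy r hr⟩

end abstractPart


section shift

variable {k : Type} [Field k] {Q : GentleData} {R : Type} [Ring R] [Algebra k R]
  {e : Q.V → R} {x : Q.A → R}
  {N E K : Type} [AddCommGroup N] [Module R N] [AddCommGroup E] [Module R E]
  [AddCommGroup K] [Module R K]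

/-- Relations predecessors are unique. -/
def UniqPred (Q : GentleData) : Prop := ∀ a b c, Q.rel a c → Q.rel b c → a = b

/-- Relation successors are unique. -/
def UniqSucc (Q : GentleData) : Prop := ∀ a b c, Q.rel a b → Q.rel a c → b = c

/-- Arrows forming a relation are composable. -/
def RelComp (Q : GentleData) : Prop := ∀ a b, Q.rel a b → Q.tgt a = Q.src b

theorem GD.lift_elem (h : GD k Q R e x) (hP : UniqPred Q) (hC : RelComp Q)
    (i : N →ₗ[R] E) (p : E →ₗ[R] K) (hi : Function.Injective i) (hp : Function.Surjective p)
    (hip : Function.Exact i p) (a : Q.A) (hH : ∀ b, Q.rel b a → HCond Q e x N b)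
    (z : K) (hz : e (Q.src a) • z = z) (hzc : ∀ c, Q.rel c a → x c • z = 0) :
    ∃ m : E, p m = z ∧ e (Q.src a) • m = m ∧ ∀ c, Q.rel c a → x c • m = 0 := by
  obtain ⟨m0, hm0⟩ := hp z
  have hm1 : p (e (Q.src a) • m0) = z := by rw [map_smul, hm0, hz]
  have hm2 : e (Q.src a) • (e (Q.src a) • m0) = e (Q.src a) • m0 := by rw [← mul_smul, h.idem]
  generalize e (Q.src a) • m0 = m at hm1 hm2
  by_cases hb : ∃ b, Q.rel b a
  · obtain ⟨b, hb⟩ := hb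
    obtain ⟨n, hn⟩ := (hip (x b • m)).1 (by rw [map_smul, hm1, hzc b hb])
    obtain ⟨y, hy⟩ := hH b hb n
      (by apply hi; rw [map_smul, hn, ← mul_smul, h.src_mul])
      (by
        intro c hc
        apply hi
        rw [map_smul, hn, ← mul_smul, h.rel_zero c b hc, zero_smul, map_zero])
    refine ⟨m - e (Q.src a) • i y, ?_, ?_, ?_⟩
    · rw [map_sub, hm1, map_smul, (hip (i y)).2 ⟨y, rfl⟩, smul_zero, sub_zero]
    · rw [smul_sub, hm2, ← mul_smul, h.idem]
    · intro c hc
      obtain rfl := hP _ _ _ hb hc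
      have : x b * e (Q.src a) = x b := by rw [← hC b a hb, h.mul_tgt]
      rw [smul_sub, ← mul_smul, this, ← hn, ← hy, map_smul, sub_self]
  · exact ⟨m, hm1, hm2, fun c hc => (hb ⟨c, hc⟩).elim⟩

theorem GD.hCond_shift (h : GD k Q R e x) (hP : UniqPred Q) (hC : RelComp Q)
    (i : N →ₗ[R] E) (p : E →ₗ[R] K) (hi : Function.Injective i) (hp : Function.Surjective p)
    (hip : Function.Exact i p) (hE : TopExt Q e x E) (a : Q.A) :
    HCond Q e x K a ↔ ∀ b, Q.rel b a → HCond Q e x N b := by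
  constructor
  · intro hK b hba n hn hc
    obtain ⟨m, hm⟩ := hE.hCond b (i n) (by rw [← map_smul, hn])
      (fun c hcb => by rw [← map_smul, hc c hcb, map_zero])
    have hxe : x b * e (Q.src a) = x b := by rw [← hC b a hba, h.mul_tgt]
    obtain ⟨z, hz⟩ := hK (p (e (Q.src a) • m))
      (by rw [← map_smul, ← mul_smul, h.idem])
      (by
        intro c hca
        obtain rfl := hP _ _ _ hba hca
        rw [← map_smul, ← mul_smul, hxe, hm]
        exact (hip (i n)).2 ⟨n, rfl⟩)
    obtain ⟨z', rfl⟩ := hp z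
    obtain ⟨n', hn'⟩ := (hip (e (Q.src a) • m - x a • z')).1
      (by rw [map_sub, map_smul p (x a), hz, sub_self])
    refine ⟨n', hi ?_⟩
    rw [map_smul, hn', smul_sub, ← mul_smul, ← mul_smul, h.rel_zero b a hba, zero_smul, sub_zero,
      hxe, hm]
  · intro hN z hz hzc
    obtain ⟨m, hm, hm1, hm2⟩ := h.lift_elem hP hC i p hi hp hip a hN z hz hzc
    obtain ⟨y, hy⟩ := hE.hCond a m hm1 hm2
    exact ⟨p y, by rw [← map_smul, hy, hm]⟩

theorem GD.topExt_shift (h : GD k Q R e x) (hP : UniqPred Q) (hC : RelComp Q)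
    (i : N →ₗ[R] E) (p : E →ₗ[R] K) (hi : Function.Injective i) (hp : Function.Surjective p)
    (hip : Function.Exact i p) (hE : TopExt Q e x E) :
    TopExt Q e x K ↔ ∀ b, (∃ a, Q.rel b a) → HCond Q e x N b := by
  constructor
  · rintro hK b ⟨a, hba⟩
    exact (h.hCond_shift hP hC i p hi hp hip hE a).1 (hK.hCond a) b hba
  · intro hN z hz hzc
    choose m hm hm1 hm2 using fun a => h.lift_elem hP hC i p hi hp hip a
      (fun b hb => hN b ⟨a, hb⟩) (z a) (hz a) (hzc a)
    obtain ⟨y, hy⟩ := hE m hm1 hm2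
    exact ⟨p y, fun a => by rw [← map_smul, hy, hm]⟩

theorem exists_injective_embedding (R : Type) [Ring R] (N : Type) [AddCommGroup N] [Module R N] :
    ∃ (E : ModuleCat.{0} R) (i : N →ₗ[R] E), Module.Injective R E ∧ Function.Injective i := by
  let J := CategoryTheory.Injective.under (ModuleCat.of R N)
  let i := CategoryTheory.Injective.ι (ModuleCat.of R N)
  refine ⟨J, i.hom, ?_, ?_⟩
  · have hJ : CategoryTheory.Injective J := CategoryTheory.Injective.injective_under _
    exact (Module.injective_iff_injective_object R J).2 hJ
  · exact (ModuleCat.mono_iff_injective i).1 inferInstance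

theorem injDimLE_zero_iff (R : Type) [Ring R] (N : Type) [AddCommGroup N] [Module R N] :
    injDimLE R 0 N ↔ Module.Injective R N := by
  constructor
  · rintro ⟨E, d, i, hE, hi, hex, -, hsub⟩
    have := hsub 0 le_rfl
    have hsurj : Function.Surjective i := fun y => (hex y).1 (Subsingleton.elim _ _)
    let eq := LinearEquiv.ofBijective i ⟨hi, hsurj⟩
    have hE0 := hE 0
    rw [← Module.Baer.iff_injective] at hE0 ⊢
    exact hE0.of_equiv eq.symm
  · intro hN
    refine ⟨fun n => match n with | 0 => ModuleCat.of R N | _ + 1 => ModuleCat.of R PUnit,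
      fun n => 0, LinearMap.id, ?_, Function.injective_id, ?_, ?_, ?_⟩
    · rintro (_ | n)
      · exact hN
      · exact ⟨fun X Y _ _ _ _ f _ g => ⟨0, fun _ => rfl⟩⟩
    · intro y
      simp
    · intro n y
      constructor
      · intro _
        exact ⟨0, Subsingleton.elim (α := PUnit) _ _⟩
      · intro _; rfl
    · intro n _
      exact inferInstanceAs (Subsingleton PUnit)

/-- Splitting off the first term of a coresolution. -/
theorem injDimLE_succ_imp (R : Type) [Ring R] (N : Type) [AddCommGroup N] [Module R N] (n : ℕ)
    (hN : injDimLE R (n + 1) N) :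
    ∃ (E : ModuleCat.{0} R) (K : ModuleCat.{0} R) (i : N →ₗ[R] E) (p : E →ₗ[R] K),
      Module.Injective R E ∧ Function.Injective i ∧ Function.Surjective p ∧ Function.Exact i p ∧
      injDimLE R n K := by
  obtain ⟨E, d, i, hE, hi, hex, hd, hsub⟩ := hN
  refine ⟨E 0, ModuleCat.of R (LinearMap.range (d 0)), i, (d 0).rangeRestrict, hE 0, hi,
    LinearMap.surjective_rangeRestrict _, ?_, ?_⟩
  · intro y
    rw [← hex y]
    constructor
    · intro hy
      exact congrArg Subtype.val hy
    · intro hy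
      exact Subtype.ext hy
  · refine ⟨fun j => E (j + 1), fun j => d (j + 1), (LinearMap.range (d 0)).subtype,
      fun j => hE _, Subtype.val_injective, ?_, fun j => hd _, fun j hj => hsub _ (by omega)⟩
    intro y
    rw [hd 0 y]
    constructor
    · rintro ⟨z, rfl⟩
      exact ⟨⟨d 0 z, z, rfl⟩, rfl⟩
    · rintro ⟨⟨_, z, rfl⟩, rfl⟩
      exact ⟨z, rfl⟩

/-- The terms of a spliced coresolution. -/
def spliceObj {R : Type} [Ring R] (E : ModuleCat.{0} R) (F : ℕ → ModuleCat.{0} R) :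
    ℕ → ModuleCat.{0} R
  | 0 => E
  | m + 1 => F m

/-- The differentials of a spliced coresolution. -/
def spliceMap {R : Type} [Ring R] (E : ModuleCat.{0} R) (F : ℕ → ModuleCat.{0} R)
    (f : ↥E →ₗ[R] ↥(F 0)) (d : ∀ m : ℕ, ↥(F m) →ₗ[R] ↥(F (m + 1))) :
    ∀ m : ℕ, ↥(spliceObj E F m) →ₗ[R] ↥(spliceObj E F (m + 1))
  | 0 => f
  | m + 1 => d m

/-- Splicing a short exact sequence with a coresolution. -/
theorem injDimLE_succ_of (R : Type) [Ring R] (N : Type) [AddCommGroup N] [Module R N] (n : ℕ)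
    (E : ModuleCat.{0} R) (K : ModuleCat.{0} R) (i : N →ₗ[R] E) (p : E →ₗ[R] K)
    (hE : Module.Injective R E) (hi : Function.Injective i) (hp : Function.Surjective p)
    (hip : Function.Exact i p) (hK : injDimLE R n K) : injDimLE R (n + 1) N := by
  obtain ⟨F, d, j, hF, hj, hex, hd, hsub⟩ := hK
  refine ⟨spliceObj E F, spliceMap E F (j ∘ₗ p) d, i, ?_, hi, ?_, ?_, ?_⟩
  · rintro (_ | m)
    · exact hE
    · exact hF m
  · intro y
    refine Iff.trans ?_ (hip y)
    change j (p y) = 0 ↔ _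
    exact map_eq_zero_iff j hj
  · rintro (_ | m)
    · intro y
      change d 0 y = 0 ↔ ∃ z, j (p z) = y
      rw [hex y]
      constructor
      · rintro ⟨z, rfl⟩
        obtain ⟨w, rfl⟩ := hp z
        exact ⟨w, rfl⟩
      · rintro ⟨z, rfl⟩
        exact ⟨p z, rfl⟩
    · exact hd m
  · rintro (_ | m) hm
    · omega
    · exact hsub m (by omega)

/-- There is a relation chain of `d + 1` arrows starting at the given one. -/
def HasChain {X : Type} (r : X → X → Prop) : ℕ → X → Prop
  | 0, _ => True
  | d + 1, b => ∃ a, r b a ∧ HasChain r d a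

theorem GD.injDimLE_succ_iff (h : GD k Q R e x) (hP : UniqPred Q) (hC : RelComp Q) (d : ℕ) :
    ∀ (N : Type) [AddCommGroup N] [Module R N],
    injDimLE R (d + 1) N ↔ ∀ b, HasChain Q.rel (d + 1) b → HCond Q e x N b := by
  induction d with
  | zero =>
    intro N _ _
    have aux : ∀ b, HasChain Q.rel (0 + 1) b ↔ ∃ a, Q.rel b a := by
      intro b; simp [HasChain]
    simp_rw [aux]
    constructor
    · intro hN
      obtain ⟨E, K, i, p, hE, hi, hp, hip, hK⟩ := injDimLE_succ_imp R N 0 hN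
      rw [injDimLE_zero_iff] at hK
      exact (h.topExt_shift hP hC i p hi hp hip (h.star_of_injective hE)).1 (h.star_of_injective hK)
    · intro hN
      obtain ⟨E, i, hE, hi⟩ := exists_injective_embedding R N
      refine injDimLE_succ_of R N 0 E (ModuleCat.of R (E ⧸ LinearMap.range i)) i
        (LinearMap.range i).mkQ hE hi (Submodule.mkQ_surjective _) (LinearMap.exact_map_mkQ_range i) ?_
      rw [injDimLE_zero_iff]
      exact h.injective_of_star ((h.topExt_shift hP hC i (LinearMap.range i).mkQ hi
        (Submodule.mkQ_surjective _) (LinearMap.exact_map_mkQ_range i) (h.star_of_injective hE)).2 hN)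
  | succ d ih =>
    intro N _ _
    constructor
    · rintro hN b ⟨a, hba, ha⟩
      obtain ⟨E, K, i, p, hE, hi, hp, hip, hK⟩ := injDimLE_succ_imp R N (d + 1) hN
      exact (h.hCond_shift hP hC i p hi hp hip (h.star_of_injective hE) a).1 ((ih K).1 hK a ha) b hba
    · intro hN
      obtain ⟨E, i, hE, hi⟩ := exists_injective_embedding R N
      refine injDimLE_succ_of R N (d + 1) E (ModuleCat.of R (E ⧸ LinearMap.range i)) i
        (LinearMap.range i).mkQ hE hi (Submodule.mkQ_surjective _) (LinearMap.exact_map_mkQ_range i) ?_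
      refine (ih _).2 fun a ha => ?_
      exact (h.hCond_shift hP hC i (LinearMap.range i).mkQ hi
        (Submodule.mkQ_surjective _) (LinearMap.exact_map_mkQ_range i)
        (h.star_of_injective hE) a).2 fun b hba => hN b ⟨a, hba, ha⟩

/-! ### The regular module -/

theorem GD.hCond_self (h : GD k Q R e x) (hS : UniqSucc Q) (hC : RelComp Q) (b : Q.A) :
    HCond Q e x R b ↔ ∃ c, Q.rel c b := by
  constructor
  · intro hb
    by_contra hcon
    push Not at hcon
    obtain ⟨y, hy⟩ := hb (e (Q.src b)) (h.idem _) (fun c hc => (hcon c hc).elim)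
    obtain ⟨f, hf1, hf2⟩ := h.chi (Q.src b)
    have := congrArg f hy
    simp [hf1, hf2] at this
  · rintro ⟨c, hcb⟩ n hn hnc
    have h0 := hnc c hcb
    have hsum : ∑ a, x a * (Pi.single c n : Q.A → R) a = 0 := by
      rw [Finset.sum_eq_single c]
      · simpa using h0
      · intro a _ hac; simp [Pi.single_eq_of_ne hac]
      · simp
    have h1 := h.ker_r _ hsum c
    rw [Pi.single_eq_same, hC c b hcb] at h1
    rw [smul_eq_mul] at hn
    rw [hn] at h1
    rcases h1 with ⟨c', y, hc', hy⟩ | h0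
    · obtain rfl := hS _ _ _ hcb hc'
      exact ⟨y, hy.symm⟩
    · exact ⟨0, by rw [h0, smul_zero]⟩

theorem GD.chi_zero (h : GD k Q R e x) (b : Q.A) (y : R) (hy : x b * y = 0)
    (f : R →ₐ[k] k) (hf1 : f (e (Q.tgt b)) = 1) (hf2 : ∀ a, f (x a) = 0) : f y = 0 := by
  have hsum : ∑ a, x a * (Pi.single b y : Q.A → R) a = 0 := by
    rw [Finset.sum_eq_single b]
    · simpa using hy
    · intro a _ hac; simp [Pi.single_eq_of_ne hac]
    · simp
  have h1 := h.ker_r _ hsum b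
  rw [Pi.single_eq_same] at h1
  rcases h1 with ⟨c', z, hc', hz⟩ | h0
  · have := congrArg f hz
    simpa [hf1, hf2] using this
  · have := congrArg f h0
    simpa [hf1, hf2] using this

/-- The combinatorial form of self-injectivity. -/
def SelfInjCond (Q : GentleData) : Prop :=
  (∀ a b, Q.tgt a = Q.tgt b → a = b) ∧ ∀ a, ∃ c, Q.rel c a

theorem GD.topExt_self (h : GD k Q R e x) (hS : UniqSucc Q) (hC : RelComp Q) :
    TopExt Q e x R ↔ SelfInjCond Q := by
  constructor
  · intro hT
    refine ⟨?_, fun a => (h.hCond_self hS hC a).1 (hT.hCond a)⟩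
    intro a b hab
    by_contra hne
    obtain ⟨y, hy⟩ := hT (Pi.single a (x a))
      (by
        intro c
        by_cases hc : c = a
        · subst hc; simpa using h.src_mul c
        · simp [Pi.single_eq_of_ne hc])
      (by
        intro c d hd
        by_cases hc : c = a
        · subst hc; simpa using h.rel_zero d c hd
        · simp [Pi.single_eq_of_ne hc])
    have ha := hy a
    have hb := hy b
    rw [Pi.single_eq_of_ne (Ne.symm hne), smul_eq_mul] at hb
    rw [Pi.single_eq_same, smul_eq_mul] at ha
    obtain ⟨f, hf1, hf2⟩ := h.chi (Q.tgt a)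
    have h1 := h.chi_zero b y hb f (by rw [← hab]; exact hf1) hf2
    have h2 := h.chi_zero a (y - 1) (by rw [mul_sub, ha, mul_one, sub_self]) f hf1 hf2
    rw [map_sub, h1, map_one] at h2
    simp at h2
  · rintro ⟨h1, h2⟩ n hn hnc
    choose y hy using fun a => (h.hCond_self hS hC a).2 (h2 a) (n a) (hn a) (hnc a)
    refine ⟨∑ b, e (Q.tgt b) * y b, fun a => ?_⟩
    rw [smul_eq_mul, Finset.mul_sum, Finset.sum_eq_single a]
    · rw [← mul_assoc, h.mul_tgt]; exact hy a
    · intro b _ hba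
      rw [← mul_assoc, h.mul_ne a _ (fun hh => hba (h1 _ _ hh.symm)), zero_mul]
    · simp

/-- The combinatorial form of self-injective dimension at most `d`. -/
def DimCond (Q : GentleData) : ℕ → Prop
  | 0 => SelfInjCond Q
  | d + 1 => ∀ b, HasChain Q.rel (d + 1) b → ∃ c, Q.rel c b

theorem GD.injDimLE_self (h : GD k Q R e x) (hP : UniqPred Q) (hS : UniqSucc Q) (hC : RelComp Q)
    (d : ℕ) : injDimLE R d R ↔ DimCond Q d := by
  cases d with
  | zero =>
    rw [injDimLE_zero_iff]
    exact ⟨fun hi => (h.topExt_self hS hC).1 (h.star_of_injective hi),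
      fun hc => h.injective_of_star ((h.topExt_self hS hC).2 hc)⟩
  | succ d =>
    rw [h.injDimLE_succ_iff hP hC d R]
    simp only [h.hCond_self hS hC]
    rfl

end shift

/-! ### Combinatorics of the relation -/

section comb

variable {X : Type} {r : X → X → Prop}

theorem HasChain.pred {d : ℕ} : ∀ {b : X}, HasChain r (d + 1) b → HasChain r d b := by
  induction d with
  | zero => intro b _; trivial
  | succ d ih =>
    rintro b ⟨a, hba, ha⟩
    exact ⟨a, hba, ih ha⟩

theorem HasChain.back {d : ℕ} : ∀ {b : X} {m : ℕ}, HasChain (fun a b => r b a) d b →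
    HasChain r m b → ∃ g, HasChain r (m + d) g ∧ Relation.ReflTransGen r g b := by
  induction d with
  | zero => intro b m _ hm; exact ⟨b, hm, .refl⟩
  | succ d ih =>
    rintro b m ⟨a, hab, ha⟩ hm
    obtain ⟨g, hg, hgb⟩ := ih ha (m := m + 1) ⟨b, hab, hm⟩
    exact ⟨g, by rwa [show m + (d + 1) = m + 1 + d by omega], hgb.tail hab⟩

theorem hasChain_swap [Finite X] (hS : ∀ a b c, r a b → r a c → b = c) (d : ℕ)
    (hd : ∀ b, HasChain r d b → ∃ c, r c b) :
    ∀ b, HasChain (fun a b => r b a) d b → ∃ c, r b c := by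
  have hstep : ∀ g : {g // HasChain r d g}, ∃ g' : {g // HasChain r d g}, r g' g := by
    rintro ⟨g, hg⟩
    obtain ⟨c, hc⟩ := hd g hg
    exact ⟨⟨c, HasChain.pred ⟨g, hc, hg⟩⟩, hc⟩
  choose f hf using hstep
  have hinj : Function.Injective f := by
    intro g g' hgg
    apply Subtype.ext
    have h1 := hf g
    rw [hgg] at h1
    exact hS _ _ _ h1 (hf g')
  have hsurj := Finite.surjective_of_injective hinj
  have hnext : ∀ g, HasChain r d g → ∃ c, r g c ∧ HasChain r d c := by
    intro g hg
    obtain ⟨g', hg'⟩ := hsurj ⟨g, hg⟩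
    refine ⟨g', ?_, g'.2⟩
    have := hf g'
    rwa [hg'] at this
  intro b hb
  obtain ⟨g, hg, hgb⟩ := HasChain.back (r := r) (m := 0) hb trivial
  rw [zero_add] at hg
  have : HasChain r d b := by
    clear hb
    induction hgb with
    | refl => exact hg
    | tail _ h2 ih =>
      rename_i p q _
      obtain ⟨c, hc, hc'⟩ := hnext p ih
      rwa [← hS _ _ _ hc h2]
  obtain ⟨c, hc, -⟩ := hnext b this
  exact ⟨c, hc⟩

theorem exists_hasChain_bound [Finite X] (hP : ∀ a b c, r a c → r b c → a = b) :
    ∃ d, ∀ b, HasChain r (d + 1) b → ∃ c, r c b := by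
  let S : ℕ →o (Set X)ᵒᵈ := ⟨fun d => OrderDual.toDual {b | HasChain r d b},
    monotone_nat_of_le_succ fun d => by
      intro b hb
      exact HasChain.pred hb⟩
  obtain ⟨d, hd⟩ := WellFoundedGT.monotone_chain_condition S
  have hS : ∀ b, HasChain r d b → HasChain r (d + 1) b := by
    intro b hb
    have h1 : S d = S (d + 1) := hd (d + 1) (by omega)
    have h2 : {b | HasChain r d b} = {b | HasChain r (d + 1) b} := h1
    exact (Set.ext_iff.1 h2 b).1 hb
  have hstep : ∀ g : {g // HasChain r d g}, ∃ g' : {g // HasChain r d g}, r g g' := by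
    rintro ⟨g, hg⟩
    obtain ⟨c, hc, hc'⟩ := hS g hg
    exact ⟨⟨c, hc'⟩, hc⟩
  choose f hf using hstep
  have hinj : Function.Injective f := by
    intro g g' hgg
    apply Subtype.ext
    have h1 := hf g
    rw [hgg] at h1
    exact hP _ _ _ h1 (hf g')
  refine ⟨d, fun b hb => ?_⟩
  obtain ⟨g', hg'⟩ := Finite.surjective_of_injective hinj ⟨b, hb.pred⟩
  refine ⟨g', ?_⟩
  have := hf g'
  rwa [hg'] at this

end comb

/-- The opposite bound quiver. -/
@[reducible] def GentleData.opp (Q : GentleData) : GentleData where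
  V := Q.V
  A := Q.A
  src := Q.tgt
  tgt := Q.src
  rel := fun a b => Q.rel b a

theorem DimCond.opp {Q : GentleData} (hS : UniqSucc Q) (hC : RelComp Q) {d : ℕ}
    (h : DimCond Q d) : DimCond Q.opp d := by
  cases d with
  | zero =>
    obtain ⟨h1, h2⟩ := h
    choose f hf using h2
    have hinj : Function.Injective f := by
      intro a b hab
      have := hf a
      rw [hab] at this
      exact hS _ _ _ this (hf b)
    refine ⟨fun a b hab => ?_, fun a => ?_⟩
    · change Q.src a = Q.src b at hab
      apply hinj
      apply h1
      rw [hC _ _ (hf a), hC _ _ (hf b), hab]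
    · obtain ⟨c, hc⟩ := Finite.surjective_of_injective hinj a
      refine ⟨c, ?_⟩
      change Q.rel a c
      rw [← hc]
      exact hf c
  | succ d => exact hasChain_swap (r := Q.rel) hS (d + 1) h


/-! ### The concrete algebra -/

/-- The defining relations in an arbitrary ring. -/
structure PreGD (Q : GentleData) (R : Type) [Ring R] (e : Q.V → R) (x : Q.A → R) : Prop where
  idem : ∀ v, e v * e v = e v
  orth : ∀ v w, v ≠ w → e v * e w = 0
  sum_e : ∑ v, e v = 1
  src_mul : ∀ a, e (Q.src a) * x a = x a
  mul_tgt : ∀ a, x a * e (Q.tgt a) = x a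
  rel_zero : ∀ a b, Q.rel a b → x a * x b = 0

section concrete

variable (k : Type) [Field k] (Q : GentleData)

theorem preGD : PreGD Q (GentleAlgebra k Q) (idemOf k Q) (arrOf k Q) where
  idem v := by
    have := RingQuot.mkAlgHom_rel k (GentleRel.idem (k := k) (Q := Q) v)
    simpa [idemOf, ofGen] using this
  orth v w h := by
    have := RingQuot.mkAlgHom_rel k (GentleRel.orth (k := k) (Q := Q) v w h)
    simpa [idemOf, ofGen] using this
  sum_e := by
    have := RingQuot.mkAlgHom_rel k (GentleRel.sum_idem (k := k) (Q := Q))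
    simpa [idemOf, ofGen] using this
  src_mul a := by
    have := RingQuot.mkAlgHom_rel k (GentleRel.src_mul (k := k) (Q := Q) a)
    simpa [idemOf, arrOf, ofGen] using this
  mul_tgt a := by
    have := RingQuot.mkAlgHom_rel k (GentleRel.mul_tgt (k := k) (Q := Q) a)
    simpa [idemOf, arrOf, ofGen] using this
  rel_zero a b h := by
    have := RingQuot.mkAlgHom_rel k (GentleRel.relation (k := k) (Q := Q) a b h)
    simpa [idemOf, arrOf, ofGen] using this

variable {k Q}

theorem exists_gaLift {B : Type} [Ring B] [Algebra k B] {e : Q.V → B} {x : Q.A → B}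
    (h : PreGD Q B e x) :
    ∃ f : GentleAlgebra k Q →ₐ[k] B, (∀ v, f (idemOf k Q v) = e v) ∧
      ∀ a, f (arrOf k Q a) = x a := by
  let g : GenSym Q → B := fun s => match s with
    | GenSym.vertex v => e v
    | GenSym.arrow a => x a
  have hg : ∀ ⦃p q : FreeAlgebra k (GenSym Q)⦄, GentleRel k Q p q →
      FreeAlgebra.lift k g p = FreeAlgebra.lift k g q := by
    intro p q hpq
    cases hpq with
    | idem v => simpa [g] using h.idem v
    | orth v w hvw => simpa [g] using h.orth v w hvw
    | sum_idem => simpa [g] using h.sum_e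
    | src_mul a => simpa [g] using h.src_mul a
    | mul_tgt a => simpa [g] using h.mul_tgt a
    | relation a b hab => simpa [g] using h.rel_zero a b hab
  refine ⟨RingQuot.liftAlgHom k ⟨FreeAlgebra.lift k g, hg⟩, fun v => ?_, fun a => ?_⟩
  · simp only [idemOf, ofGen, RingQuot.liftAlgHom_mkAlgHom_apply, FreeAlgebra.lift_ι_apply, g]
  · simp only [arrOf, ofGen, RingQuot.liftAlgHom_mkAlgHom_apply, FreeAlgebra.lift_ι_apply, g]

theorem ga_induction {P : GentleAlgebra k Q → Prop}
    (hk : ∀ c : k, P (algebraMap k _ c)) (he : ∀ v, P (idemOf k Q v)) (hx : ∀ a, P (arrOf k Q a))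
    (hmul : ∀ r s, P r → P s → P (r * s)) (hadd : ∀ r s, P r → P s → P (r + s))
    (r : GentleAlgebra k Q) : P r := by
  obtain ⟨r, rfl⟩ := RingQuot.mkAlgHom_surjective k (GentleRel k Q) r
  induction r using FreeAlgebra.induction with
  | grade0 c => rw [AlgHom.commutes]; exact hk c
  | grade1 s =>
    cases s with
    | vertex v => exact he v
    | arrow a => exact hx a
  | mul a b ha hb => rw [map_mul]; exact hmul _ _ ha hb
  | add a b ha hb => rw [map_add]; exact hadd _ _ ha hb

variable (k Q)

/-- The vector space on words in the arrows with a starting vertex. -/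
abbrev WordSpace : Type := (Q.V × List Q.A) →₀ k

/-- The action of a vertex on words. -/
noncomputable def vertexAct (v : Q.V) : Module.End k (WordSpace k Q) :=
  Finsupp.linearCombination k (fun p => if p.1 = v then Finsupp.single p (1 : k) else 0)

/-- A word may be prolonged by an arrow on the left. -/
def Prolong (a : Q.A) (p : Q.V × List Q.A) : Prop :=
  p.1 = Q.tgt a ∧ ∀ b l, p.2 = b :: l → ¬ Q.rel a b

open Classical in
/-- The action of an arrow on words. -/
noncomputable def arrowAct (a : Q.A) : Module.End k (WordSpace k Q) :=
  Finsupp.linearCombination k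
    (fun p => if Prolong Q a p then Finsupp.single (Q.src a, a :: p.2) (1 : k) else 0)

theorem vertexAct_single (v : Q.V) (p : Q.V × List Q.A) :
    vertexAct k Q v (Finsupp.single p 1) = if p.1 = v then Finsupp.single p (1 : k) else 0 := by
  simp [vertexAct]

open Classical in
theorem arrowAct_single (a : Q.A) (p : Q.V × List Q.A) :
    arrowAct k Q a (Finsupp.single p 1) =
      if Prolong Q a p then Finsupp.single (Q.src a, a :: p.2) (1 : k) else 0 := by
  simp [arrowAct]

theorem preGD_act : PreGD Q (Module.End k (WordSpace k Q)) (vertexAct k Q) (arrowAct k Q) := by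
  classical
  constructor
  · intro v
    refine Finsupp.lhom_ext' fun p => LinearMap.ext_ring ?_
    simp only [LinearMap.comp_apply, Finsupp.lsingle_apply, Module.End.mul_apply, vertexAct_single]
    split_ifs with h <;> simp [vertexAct_single, h]
  · intro v w hvw
    refine Finsupp.lhom_ext' fun p => LinearMap.ext_ring ?_
    simp only [LinearMap.comp_apply, Finsupp.lsingle_apply, Module.End.mul_apply, vertexAct_single]
    split_ifs with h
    · subst h; simp [vertexAct_single, Ne.symm hvw]
    · simp
  · refine Finsupp.lhom_ext' fun p => LinearMap.ext_ring ?_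
    simp only [LinearMap.comp_apply, Finsupp.lsingle_apply, LinearMap.sum_apply, vertexAct_single]
    simp
  · intro a
    refine Finsupp.lhom_ext' fun p => LinearMap.ext_ring ?_
    simp only [LinearMap.comp_apply, Finsupp.lsingle_apply, Module.End.mul_apply, arrowAct_single]
    split_ifs with h <;> simp [vertexAct_single]
  · intro a
    refine Finsupp.lhom_ext' fun p => LinearMap.ext_ring ?_
    simp only [LinearMap.comp_apply, Finsupp.lsingle_apply, Module.End.mul_apply, vertexAct_single]
    split_ifs with h
    · rfl
    · rw [arrowAct_single, if_neg (fun h' => h h'.1), map_zero]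
  · intro a b hab
    refine Finsupp.lhom_ext' fun p => LinearMap.ext_ring ?_
    simp only [LinearMap.comp_apply, Finsupp.lsingle_apply, Module.End.mul_apply, arrowAct_single]
    split_ifs with h
    · rw [arrowAct_single, if_neg (fun h' => h'.2 b p.2 rfl hab)]
      simp
    · simp

/-- The element of the algebra given by a word. -/
noncomputable def wordEl (p : Q.V × List Q.A) : GentleAlgebra k Q :=
  idemOf k Q p.1 * (p.2.map (arrOf k Q)).prod

/-- The evaluation of words in the algebra. -/
noncomputable def wordEval : WordSpace k Q →ₗ[k] GentleAlgebra k Q :=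
  Finsupp.linearCombination k (wordEl k Q)

theorem wordEval_single (p : Q.V × List Q.A) :
    wordEval k Q (Finsupp.single p 1) = wordEl k Q p := by
  simp [wordEval]

theorem vertex_mul_wordEl (v : Q.V) (p : Q.V × List Q.A) :
    idemOf k Q v * wordEl k Q p = if p.1 = v then wordEl k Q p else 0 := by
  have h := preGD k Q
  unfold wordEl
  split_ifs with hp
  · rw [hp, ← mul_assoc, h.idem]
  · rw [← mul_assoc, h.orth _ _ (Ne.symm hp), zero_mul]

open Classical in
theorem arrow_mul_wordEl (a : Q.A) (p : Q.V × List Q.A) :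
    arrOf k Q a * wordEl k Q p =
      if Prolong Q a p then wordEl k Q (Q.src a, a :: p.2) else 0 := by
  have h := preGD k Q
  unfold wordEl
  split_ifs with hp
  · rw [hp.1, ← mul_assoc, h.mul_tgt, List.map_cons, List.prod_cons, ← mul_assoc, h.src_mul]
  · by_cases h1 : p.1 = Q.tgt a
    · have : ∃ b l, p.2 = b :: l ∧ Q.rel a b := by
        by_contra hcon
        push Not at hcon
        exact hp ⟨h1, hcon⟩
      obtain ⟨b, l, hl, hab⟩ := this
      rw [h1, hl, ← mul_assoc, h.mul_tgt, List.map_cons, List.prod_cons, ← mul_assoc,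
        h.rel_zero a b hab, zero_mul]
    · rw [← mul_assoc, ← h.mul_tgt, mul_assoc (arrOf k Q a), h.orth _ _ (Ne.symm h1), mul_zero,
        zero_mul]

theorem exists_action : ∃ ρ : GentleAlgebra k Q →ₐ[k] Module.End k (WordSpace k Q),
    (∀ a, ρ (arrOf k Q a) = arrowAct k Q a) ∧
    ∀ r w, wordEval k Q (ρ r w) = r * wordEval k Q w := by
  classical
  obtain ⟨ρ, hρe, hρx⟩ := exists_gaLift (k := k) (preGD_act k Q)
  refine ⟨ρ, hρx, ?_⟩
  intro r
  induction r using ga_induction with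
  | hk c => intro w; simp [Algebra.smul_def]
  | he v =>
    intro w
    rw [hρe]
    induction w using Finsupp.induction_linear with
    | zero => simp
    | add w w' hw hw' => simp [mul_add, hw, hw']
    | single p c =>
      rw [← mul_one c, ← smul_eq_mul, ← Finsupp.smul_single, map_smul, map_smul, map_smul,
        mul_smul_comm, vertexAct_single, wordEval_single, vertex_mul_wordEl]
      split_ifs <;> simp [wordEval_single]
  | hx a =>
    intro w
    rw [hρx]
    induction w using Finsupp.induction_linear with
    | zero => simp
    | add w w' hw hw' => simp [mul_add, hw, hw']
    | single p c =>
      rw [← mul_one c, ← smul_eq_mul, ← Finsupp.smul_single, map_smul, map_smul, map_smul,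
        mul_smul_comm, arrowAct_single, wordEval_single, arrow_mul_wordEl]
      split_ifs <;> simp [wordEval_single]
  | hmul r s hr hs =>
    intro w
    rw [map_mul, Module.End.mul_apply, hr, hs, mul_assoc]
  | hadd r s hr hs =>
    intro w
    rw [map_add, LinearMap.add_apply, map_add, hr, hs, add_mul]

/-- The word vector of the unit. -/
noncomputable def oneWord : WordSpace k Q := ∑ v, Finsupp.single (v, []) 1

theorem wordEval_oneWord : wordEval k Q (oneWord k Q) = 1 := by
  rw [oneWord, map_sum, ← (preGD k Q).sum_e]
  refine Finset.sum_congr rfl fun v _ => ?_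
  rw [wordEval_single]
  simp [wordEl]

theorem wordEval_surjective : Function.Surjective (wordEval k Q) := by
  obtain ⟨ρ, -, hρ⟩ := exists_action k Q
  intro r
  exact ⟨ρ r (oneWord k Q), by rw [hρ, wordEval_oneWord, mul_one]⟩

theorem arrowAct_apply_cons (a b : Q.A) (l : List Q.A) (w : WordSpace k Q)
    (hl : Prolong Q a (Q.tgt a, l)) :
    arrowAct k Q b w (Q.src a, a :: l) = if b = a then w (Q.tgt a, l) else 0 := by
  classical
  induction w using Finsupp.induction_linear with
  | zero => simp
  | add w w' hw hw' => simp only [map_add, Finsupp.add_apply, hw, hw']; split_ifs <;> simp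
  | single p c =>
    rw [← mul_one c, ← smul_eq_mul, ← Finsupp.smul_single, map_smul, arrowAct_single]
    by_cases hba : b = a
    · subst hba
      obtain ⟨v, l'⟩ := p
      by_cases hp : Prolong Q b (v, l')
      · have hv : v = Q.tgt b := hp.1
        subst hv
        simp [hp, Finsupp.single_apply]
      · have : ¬ (v = Q.tgt b ∧ l' = l) := by
          rintro ⟨rfl, rfl⟩; exact hp hl
        simp [hp, Finsupp.single_apply, this]
    · by_cases hp : Prolong Q b p
      · simp [hp, hba]
      · simp [hp, hba]

theorem ga_ker_r (hS : UniqSucc Q) (hC : RelComp Q) (r : Q.A → GentleAlgebra k Q)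
    (hr : ∑ a, arrOf k Q a * r a = 0) (a : Q.A) :
    (∃ c b, Q.rel a c ∧ idemOf k Q (Q.tgt a) * r a = arrOf k Q c * b) ∨
      idemOf k Q (Q.tgt a) * r a = 0 := by
  classical
  obtain ⟨ρ, hρx, hρ⟩ := exists_action k Q
  have h := preGD k Q
  have h0 : ∑ b, arrowAct k Q b (ρ (r b) (oneWord k Q)) = 0 := by
    have := congrArg (fun s => ρ s (oneWord k Q)) hr
    simpa [hρx] using this
  have hcoef : ∀ l, Prolong Q a (Q.tgt a, l) → ρ (r a) (oneWord k Q) (Q.tgt a, l) = 0 := by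
    intro l hl
    have h1 := DFunLike.congr_fun h0 (Q.src a, a :: l)
    rw [Finsupp.finsetSum_apply] at h1
    simp only [arrowAct_apply_cons k Q a _ l _ hl] at h1
    simpa using h1
  have hra : r a = wordEval k Q (ρ (r a) (oneWord k Q)) := by
    rw [hρ, wordEval_oneWord, mul_one]
  generalize ρ (r a) (oneWord k Q) = w at hcoef hra
  have hexp : idemOf k Q (Q.tgt a) * r a =
      ∑ p ∈ w.support, w p • (idemOf k Q (Q.tgt a) * wordEl k Q p) := by
    rw [hra, wordEval, Finsupp.linearCombination_apply, Finsupp.sum, Finset.mul_sum]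
    simp only [mul_smul_comm]
  -- the words which occur start with a relation
  have hterm : ∀ p ∈ w.support, idemOf k Q (Q.tgt a) * wordEl k Q p = 0 ∨
      ∃ c l, Q.rel a c ∧ idemOf k Q (Q.tgt a) * wordEl k Q p = arrOf k Q c * l := by
    rintro ⟨v, l⟩ hp
    rw [vertex_mul_wordEl]
    split_ifs with hv
    · change v = Q.tgt a at hv
      subst hv
      right
      have hnp : ¬ Prolong Q a (Q.tgt a, l) := fun hl => (Finsupp.mem_support_iff.1 hp) (hcoef l hl)
      have : ∃ b l', l = b :: l' ∧ Q.rel a b := by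
        by_contra hcon
        push Not at hcon
        exact hnp ⟨rfl, hcon⟩
      obtain ⟨b, l', rfl, hab⟩ := this
      refine ⟨b, (l'.map (arrOf k Q)).prod, hab, ?_⟩
      simp only [wordEl, List.map_cons, List.prod_cons]
      rw [hC a b hab, ← mul_assoc, h.src_mul]
    · left; rfl
  by_cases hc : ∃ c, Q.rel a c
  · left
    obtain ⟨c, hac⟩ := hc
    have hmem : idemOf k Q (Q.tgt a) * r a ∈
        LinearMap.range (LinearMap.mulLeft k (arrOf k Q c)) := by
      rw [hexp]
      refine Submodule.sum_mem _ fun p hp => Submodule.smul_mem _ _ ?_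
      rcases hterm p hp with h1 | ⟨c', l, hc', hl⟩
      · rw [h1]; exact Submodule.zero_mem _
      · obtain rfl := hS _ _ _ hac hc'
        exact ⟨l, hl.symm⟩
    obtain ⟨b, hb⟩ := hmem
    exact ⟨c, b, hac, hb.symm⟩
  · right
    rw [hexp]
    refine Finset.sum_eq_zero fun p hp => ?_
    rcases hterm p hp with h1 | ⟨c', l, hc', hl⟩
    · rw [h1, smul_zero]
    · exact (hc ⟨c', hc'⟩).elim

theorem preGD_opp {R : Type} [Ring R] {e : Q.V → R} {x : Q.A → R} (h : PreGD Q R e x) :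
    PreGD Q.opp Rᵐᵒᵖ (fun v => op (e v)) (fun a => op (x a)) where
  idem v := by rw [← op_mul, h.idem]
  orth v w hvw := by rw [← op_mul, h.orth _ _ (Ne.symm hvw), op_zero]
  sum_e := by
    rw [← op_one, ← h.sum_e]
    exact (map_sum (opAddEquiv (α := R)) _ _).symm
  src_mul a := by rw [← op_mul, h.mul_tgt]
  mul_tgt a := by rw [← op_mul, h.src_mul]
  rel_zero a b hab := by rw [← op_mul, h.rel_zero _ _ hab, op_zero]

theorem exists_opp_hom : ∃ f : GentleAlgebra k Q →ₐ[k] (GentleAlgebra k Q.opp)ᵐᵒᵖ,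
    (∀ v, f (idemOf k Q v) = op (idemOf k Q.opp v)) ∧
      ∀ a, f (arrOf k Q a) = op (arrOf k Q.opp a) :=
  exists_gaLift (k := k) (Q := Q) (preGD_opp Q.opp (preGD k Q.opp))

theorem exists_opp_hom' : ∃ f : GentleAlgebra k Q.opp →ₐ[k] (GentleAlgebra k Q)ᵐᵒᵖ,
    (∀ v, f (idemOf k Q.opp v) = op (idemOf k Q v)) ∧
      ∀ a, f (arrOf k Q.opp a) = op (arrOf k Q a) :=
  exists_gaLift (k := k) (Q := Q.opp) (preGD_opp Q (preGD k Q))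

theorem ga_ker_l (hP : UniqPred Q) (hC : RelComp Q) (r : Q.A → GentleAlgebra k Q)
    (hr : ∑ a, r a * arrOf k Q a = 0) (a : Q.A) :
    (∃ c b, Q.rel c a ∧ r a * idemOf k Q (Q.src a) = b * arrOf k Q c) ∨
      r a * idemOf k Q (Q.src a) = 0 := by
  obtain ⟨f, hfe, hfx⟩ := exists_opp_hom k Q
  obtain ⟨g, hge, hgx⟩ := exists_opp_hom' k Q
  have hgf : ∀ s, unop (g (unop (f s))) = s := by
    intro s
    induction s using ga_induction with
    | hk c => simp [MulOpposite.algebraMap_apply]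
    | he v => rw [hfe, unop_op, hge, unop_op]
    | hx a => rw [hfx, unop_op, hgx, unop_op]
    | hmul s t hs ht => rw [map_mul, unop_mul, map_mul, unop_mul, hs, ht]
    | hadd s t hs ht => rw [map_add, unop_add, map_add, unop_add, hs, ht]
  have h0 : ∑ a, arrOf k Q.opp a * unop (f (r a)) = 0 := by
    have := congrArg (fun s => unop (f s)) hr
    simpa [hfx] using this
  rcases ga_ker_r k Q.opp (fun a b c h1 h2 => hP _ _ _ h1 h2) (fun a b h1 => (hC _ _ h1).symm)
    (fun a => unop (f (r a))) h0 a with ⟨c, b, hc, hb⟩ | h1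
  · left
    refine ⟨c, unop (g b), hc, ?_⟩
    have := congrArg (fun s => unop (g s)) hb
    simp only [map_mul, unop_mul, hgf, hgx, unop_op, hge] at this
    exact this
  · right
    have := congrArg (fun s => unop (g s)) h1
    simp only [map_mul, unop_mul, hgf, unop_op, hge, map_zero, unop_zero] at this
    exact this

theorem ga_dec_l (r : GentleAlgebra k Q) : ∃ (c : Q.V → k) (s : Q.A → GentleAlgebra k Q),
    r = ∑ v, c v • idemOf k Q v + ∑ a, s a * arrOf k Q a := by
  obtain ⟨w, rfl⟩ := wordEval_surjective k Q r
  induction w using Finsupp.induction_linear with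
  | zero => exact ⟨0, 0, by simp⟩
  | add w w' hw hw' =>
    obtain ⟨c, s, h⟩ := hw
    obtain ⟨c', s', h'⟩ := hw'
    refine ⟨c + c', s + s', ?_⟩
    rw [map_add, h, h']
    simp only [Pi.add_apply, add_smul, add_mul, Finset.sum_add_distrib]
    abel
  | single p t =>
    obtain ⟨v, l⟩ := p
    rw [← mul_one t, ← smul_eq_mul, ← Finsupp.smul_single, map_smul, wordEval_single]
    rcases List.eq_nil_or_concat l with rfl | ⟨l', a, rfl⟩
    · refine ⟨Pi.single v t, 0, ?_⟩
      rw [Finset.sum_eq_single v]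
      · simp [wordEl]
      · intro b _ hb; simp [Pi.single_eq_of_ne hb]
      · simp
    · refine ⟨0, Pi.single a (t • wordEl k Q (v, l')), ?_⟩
      rw [Finset.sum_eq_single (s := Finset.univ) a]
      · simp [wordEl, mul_assoc]
      · intro b _ hb; simp [Pi.single_eq_of_ne hb]
      · simp

theorem ga_dec_r (r : GentleAlgebra k Q) : ∃ (c : Q.V → k) (s : Q.A → GentleAlgebra k Q),
    r = ∑ v, c v • idemOf k Q v + ∑ a, arrOf k Q a * s a := by
  obtain ⟨w, rfl⟩ := wordEval_surjective k Q r
  induction w using Finsupp.induction_linear with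
  | zero => exact ⟨0, 0, by simp⟩
  | add w w' hw hw' =>
    obtain ⟨c, s, h⟩ := hw
    obtain ⟨c', s', h'⟩ := hw'
    refine ⟨c + c', s + s', ?_⟩
    rw [map_add, h, h']
    simp only [Pi.add_apply, add_smul, mul_add, Finset.sum_add_distrib]
    abel
  | single p t =>
    obtain ⟨v, l⟩ := p
    rw [← mul_one t, ← smul_eq_mul, ← Finsupp.smul_single, map_smul, wordEval_single]
    rcases l with _ | ⟨a, l'⟩
    · refine ⟨Pi.single v t, 0, ?_⟩
      rw [Finset.sum_eq_single v]
      · simp [wordEl]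
      · intro b _ hb; simp [Pi.single_eq_of_ne hb]
      · simp
    · have h := preGD k Q
      by_cases hv : v = Q.src a
      · refine ⟨0, Pi.single a (t • (l'.map (arrOf k Q)).prod), ?_⟩
        rw [Finset.sum_eq_single (s := Finset.univ) a]
        · simp [wordEl, ← mul_assoc, hv, h.src_mul]
        · intro b _ hb; simp [Pi.single_eq_of_ne hb]
        · simp
      · refine ⟨0, 0, ?_⟩
        have : wordEl k Q (v, a :: l') = 0 := by
          simp only [wordEl, List.map_cons, List.prod_cons]
          rw [← h.src_mul, ← mul_assoc, ← mul_assoc, h.orth _ _ hv, zero_mul, zero_mul]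
        simp [this]

theorem ga_prod_chain (l : List Q.A) (hl : (l.map (arrOf k Q)).prod ≠ 0) :
    l.IsChain (fun a b => Q.tgt a = Q.src b ∧ ¬ Q.rel a b) := by
  have h := preGD k Q
  induction l with
  | nil => simp
  | cons a l ih =>
    rw [List.map_cons, List.prod_cons] at hl
    have hl' := ih (fun h0 => hl (by rw [h0, mul_zero]))
    cases l with
    | nil => simp
    | cons b l =>
      rw [List.isChain_cons_cons]
      refine ⟨?_, hl'⟩
      rw [List.map_cons, List.prod_cons, ← mul_assoc] at hl
      constructor
      · by_contra hab
        apply hl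
        have h0 : arrOf k Q a * arrOf k Q b = 0 := by
          rw [← h.mul_tgt a, ← h.src_mul b, mul_assoc, ← mul_assoc (idemOf k Q (Q.tgt a)),
            h.orth _ _ hab, zero_mul, mul_zero]
        rw [h0, zero_mul]
      · intro hab
        exact hl (by rw [h.rel_zero a b hab, zero_mul])

theorem ga_nil (hN : ∃ N : ℕ, ∀ p : ℕ → Q.A, ¬ ∀ i, i < N →
      (Q.tgt (p i) = Q.src (p (i+1)) ∧ ¬ Q.rel (p i) (p (i+1)))) :
    ∃ n : ℕ, ∀ l : List Q.A, l.length = n → (l.map (arrOf k Q)).prod = 0 := by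
  obtain ⟨N, hN⟩ := hN
  refine ⟨N + 1, fun l hl => ?_⟩
  by_contra hne
  have hch := ga_prod_chain k Q l hne
  have h0 : 0 < l.length := by omega
  apply hN (fun i => l.getD i l[0])
  intro i hi
  have h1 : i + 1 < l.length := by omega
  have := List.isChain_iff_getElem.1 hch i h1
  simpa [List.getD_eq_getElem, h1, (show i < l.length by omega)] using this

theorem ga_fin (hN : ∃ n : ℕ, ∀ l : List Q.A, l.length = n → (l.map (arrOf k Q)).prod = 0) :
    Module.Finite k (GentleAlgebra k Q) := by
  obtain ⟨n, hn⟩ := hN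
  have hbig : ∀ p : Q.V × List Q.A, n ≤ p.2.length → wordEl k Q p = 0 := by
    intro p hp
    unfold wordEl
    rw [← List.take_append_drop n p.2, List.map_append, List.prod_append,
      hn _ (by simpa using hp), zero_mul, mul_zero]
  have hfin : (Set.univ ×ˢ {l : List Q.A | l.length < n} : Set (Q.V × List Q.A)).Finite :=
    Set.Finite.prod Set.finite_univ (List.finite_length_lt Q.A n)
  refine ⟨Submodule.fg_def.2 ⟨wordEl k Q '' _, hfin.image _, ?_⟩⟩
  rw [eq_top_iff]
  rintro r -
  obtain ⟨w, rfl⟩ := wordEval_surjective k Q r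
  rw [wordEval, Finsupp.linearCombination_apply]
  refine Submodule.sum_mem _ fun p _ => Submodule.smul_mem _ _ ?_
  by_cases hp : n ≤ p.2.length
  · rw [hbig p hp]; exact Submodule.zero_mem _
  · exact Submodule.subset_span ⟨p, ⟨trivial, by simpa using hp⟩, rfl⟩

theorem ga_chi (v : Q.V) : ∃ f : GentleAlgebra k Q →ₐ[k] k, f (idemOf k Q v) = 1 ∧
    ∀ a, f (arrOf k Q a) = 0 := by
  have h : PreGD Q k (fun w => if w = v then 1 else 0) (fun _ => 0) := by
    constructor
    · intro w; simp
    · intro w w' hw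
      by_cases h1 : w = v
      · subst h1; simp [Ne.symm hw]
      · simp [h1]
    · simp
    · simp
    · simp
    · simp
  obtain ⟨f, hf1, hf2⟩ := exists_gaLift (k := k) h
  exact ⟨f, by simp [hf1], hf2⟩

theorem uniq_of_ncard {X : Type} [Finite X] {S : Set X} (h : S.ncard ≤ 1) {a b : X} (ha : a ∈ S)
    (hb : b ∈ S) : a = b :=
  (Set.ncard_le_one (Set.toFinite S)).1 h a ha b hb

theorem IsGentle.uniqPred {Q : GentleData} (h : IsGentle Q) : UniqPred Q := by
  intro a b c hac hbc
  exact uniq_of_ncard (h.2.2.2.2.1 c) ⟨h.1 _ _ hac, hac⟩ ⟨h.1 _ _ hbc, hbc⟩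

theorem IsGentle.uniqSucc {Q : GentleData} (h : IsGentle Q) : UniqSucc Q := by
  intro a b c hac hbc
  exact uniq_of_ncard (h.2.2.2.2.2.2.1 a) ⟨(h.1 _ _ hac).symm, hac⟩ ⟨(h.1 _ _ hbc).symm, hbc⟩

theorem ga_GD (hQ : IsGentle Q) : GD k Q (GentleAlgebra k Q) (idemOf k Q) (arrOf k Q) where
  idem := (preGD k Q).idem
  orth := (preGD k Q).orth
  sum_e := (preGD k Q).sum_e
  src_mul := (preGD k Q).src_mul
  mul_tgt := (preGD k Q).mul_tgt
  rel_zero := (preGD k Q).rel_zero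
  ker_r := ga_ker_r k Q hQ.uniqSucc hQ.1
  ker_l := ga_ker_l k Q hQ.uniqPred hQ.1
  dec_l := ga_dec_l k Q
  dec_r := ga_dec_r k Q
  nil := ga_nil k Q hQ.2.2.2.2.2.2.2
  chi := ga_chi k Q
  fin := ga_fin k Q (ga_nil k Q hQ.2.2.2.2.2.2.2)

end concrete

theorem GD.opp {k : Type} [Field k] {Q : GentleData} {R : Type} [Ring R] [Algebra k R]
    {e : Q.V → R} {x : Q.A → R} (h : GD k Q R e x) :
    GD k Q.opp Rᵐᵒᵖ (fun v => op (e v)) (fun a => op (x a)) where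
  idem v := by rw [← op_mul, h.idem]
  orth v w hvw := by rw [← op_mul, h.orth _ _ (Ne.symm hvw), op_zero]
  sum_e := by
    rw [← op_one, ← h.sum_e]
    exact (map_sum (opAddEquiv (α := R)) _ _).symm
  src_mul a := by rw [← op_mul, h.mul_tgt]
  mul_tgt a := by rw [← op_mul, h.src_mul]
  rel_zero a b hab := by rw [← op_mul, h.rel_zero _ _ hab, op_zero]
  ker_r r hr a := by
    have h0 : ∑ a, unop (r a) * x a = 0 := by
      have := congrArg unop hr
      simpa using this
    rcases h.ker_l (fun a => unop (r a)) h0 a with ⟨c, b, hc, hb⟩ | h1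
    · exact Or.inl ⟨c, op b, hc, unop_injective (by simpa using hb)⟩
    · exact Or.inr (unop_injective (by simpa using h1))
  ker_l r hr a := by
    have h0 : ∑ a, x a * unop (r a) = 0 := by
      have := congrArg unop hr
      simpa using this
    rcases h.ker_r (fun a => unop (r a)) h0 a with ⟨c, b, hc, hb⟩ | h1
    · exact Or.inl ⟨c, op b, hc, unop_injective (by simpa using hb)⟩
    · exact Or.inr (unop_injective (by simpa using h1))
  dec_l r := by
    obtain ⟨c, s, hcs⟩ := h.dec_r (unop r)
    exact ⟨c, fun a => op (s a), unop_injective (by simpa using hcs)⟩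
  dec_r r := by
    obtain ⟨c, s, hcs⟩ := h.dec_l (unop r)
    exact ⟨c, fun a => op (s a), unop_injective (by simpa using hcs)⟩
  nil := by
    obtain ⟨n, hn⟩ := h.nil
    refine ⟨n, fun l hl => unop_injective ?_⟩
    have := hn l.reverse (by simpa using hl)
    rw [MulOpposite.unop_list_prod]
    simpa [List.map_reverse, Function.comp_def] using this
  chi v := by
    obtain ⟨f, hf1, hf2⟩ := h.chi v
    exact ⟨f.fromOpposite (fun _ _ => Commute.all _ _), by simpa using hf1, by simpa using hf2⟩
  fin := by
    have := h.fin
    exact Module.Finite.equiv (opLinearEquiv k : R ≃ₗ[k] Rᵐᵒᵖ)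

theorem injDimLE_of_equiv (R : Type) [Ring R] (n : ℕ) (M N : Type) [AddCommGroup M] [Module R M]
    [AddCommGroup N] [Module R N] (f : M ≃ₗ[R] N) (h : injDimLE R n N) : injDimLE R n M := by
  obtain ⟨E, d, i, hE, hi, hex, hd, hsub⟩ := h
  refine ⟨E, d, i ∘ₗ f.toLinearMap, hE, hi.comp f.injective, ?_, hd, hsub⟩
  intro y
  rw [hex y]
  constructor
  · rintro ⟨z, rfl⟩
    exact ⟨f.symm z, by simp⟩
  · rintro ⟨z, rfl⟩
    exact ⟨f z, rfl⟩

/-- The right regular module, seen as a left module over the opposite ring. -/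
def regularOpEquiv (R : Type) [Ring R] : R ≃ₗ[Rᵐᵒᵖ] Rᵐᵒᵖ :=
  { opAddEquiv with
    map_smul' := fun r s => by
      apply unop_injective
      simp }

/-- Every gentle algebra is Gorenstein: its injective
dimensions as a left and as a right module over itself are finite (and
equal). -/
theorem gentle_isGorenstein
    (k : Type) [Field k] [IsAlgClosed k] (Q : GentleData) (hQ : IsGentle Q) :
    leftSelfInjDim (GentleAlgebra k Q) ≠ ⊤ ∧
    rightSelfInjDim (GentleAlgebra k Q) ≠ ⊤ ∧
    leftSelfInjDim (GentleAlgebra k Q) = rightSelfInjDim (GentleAlgebra k Q) := by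
  have hP := hQ.uniqPred
  have hS := hQ.uniqSucc
  have hC : RelComp Q := hQ.1
  have hP' : UniqPred Q.opp := fun a b c h1 h2 => hS _ _ _ h1 h2
  have hS' : UniqSucc Q.opp := fun a b c h1 h2 => hP _ _ _ h1 h2
  have hC' : RelComp Q.opp := fun a b h => (hC _ _ h).symm
  have h := ga_GD k Q hQ
  have hleft : ∀ d, injDimLE (GentleAlgebra k Q) d (GentleAlgebra k Q) ↔ DimCond Q d :=
    h.injDimLE_self hP hS hC
  have hright : ∀ d, injDimLE (GentleAlgebra k Q)ᵐᵒᵖ d (GentleAlgebra k Q) ↔ DimCond Q d := by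
    intro d
    have h1 : injDimLE (GentleAlgebra k Q)ᵐᵒᵖ d (GentleAlgebra k Q)ᵐᵒᵖ ↔ DimCond Q.opp d :=
      h.opp.injDimLE_self hP' hS' hC' d
    have h2 : DimCond Q.opp d ↔ DimCond Q d :=
      ⟨fun hd => DimCond.opp (Q := Q.opp) hS' hC' hd, fun hd => DimCond.opp hS hC hd⟩
    rw [← h2, ← h1]
    exact ⟨injDimLE_of_equiv _ d _ _ (regularOpEquiv (GentleAlgebra k Q)).symm,
      injDimLE_of_equiv _ d _ _ (regularOpEquiv (GentleAlgebra k Q))⟩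
  have heq : leftSelfInjDim (GentleAlgebra k Q) = rightSelfInjDim (GentleAlgebra k Q) := by
    unfold leftSelfInjDim rightSelfInjDim injDim
    simp only [hleft, hright]
  have hne : leftSelfInjDim (GentleAlgebra k Q) ≠ ⊤ := by
    obtain ⟨d, hd⟩ := exists_hasChain_bound (X := Q.A) (r := Q.rel) hP
    have hle : leftSelfInjDim (GentleAlgebra k Q) ≤ ((d + 1 : ℕ) : ℕ∞) :=
      sInf_le ⟨d + 1, rfl, (hleft (d + 1)).2 hd⟩
    exact ne_top_of_le_ne_top (ENat.natCast_ne_top _) hle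
  exact ⟨hne, heq ▸ hne, heq⟩
end

section
/- Let A = kQ/I be a gentle algebra and let α ∈ Q₁ be an arrow with sink v lying on an oriented cycle with full relations. Then αA is an indecomposable Gorenstein projective module and the top of αA is isomorphic to the simple module S(v). In particular, if two oriented cycles with full relations α₁⋯α_m and β₁⋯β_n share a common vertex v₀ = t(α_h) = t(β_ħ) = s(α_{h+1}) = s(β_{ħ+1}), then α_h A and β_ħ A are indecomposable Gorenstein projective modules with top(α_h A) ≅ top(β_ħ A) ≅ S(v₀). -/
open MulOpposite DirectSum

set_option autoImplicit false

section Helpers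

open Classical

/-! ### The path model -/

/-- Words: a starting vertex and a reversed list of arrows. -/
abbrev GWord (Q : GentleData) : Type := Q.V × List Q.A

abbrev GMod (k : Type) [Field k] (Q : GentleData) : Type := GWord Q →₀ k

def gEnd (Q : GentleData) (p : GWord Q) : Q.V :=
  match p.2 with
  | [] => p.1
  | b :: _ => Q.tgt b

def gGoodR (Q : GentleData) (a : Q.A) (p : GWord Q) : Prop :=
  gEnd Q p = Q.src a ∧ ∀ b ∈ p.2.head?, ¬ Q.rel b a

def gGoodL (Q : GentleData) (c : Q.A) (p : GWord Q) : Prop :=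
  p.1 = Q.tgt c ∧ ∀ b ∈ p.2.getLast?, ¬ Q.rel c b

noncomputable def gStep (k : Type) [Field k] (Q : GentleData) : GenSym Q → GWord Q → GMod k Q
  | GenSym.vertex w, p => if gEnd Q p = w then Finsupp.single p 1 else 0
  | GenSym.arrow a, p => if gGoodR Q a p then Finsupp.single (p.1, a :: p.2) 1 else 0

noncomputable def gAct (k : Type) [Field k] (Q : GentleData) (x : GenSym Q) :
    Module.End k (GMod k Q) :=
  Finsupp.linearCombination k (gStep k Q x)

theorem gAct_single (k : Type) [Field k] (Q : GentleData) (x : GenSym Q) (p : GWord Q) :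
    gAct k Q x (Finsupp.single p 1) = gStep k Q x p := by
  simp [gAct]

theorem gEnd_ext {k : Type} [Field k] {Q : GentleData} {M : Type*} [AddCommGroup M] [Module k M]
    {f g : GMod k Q →ₗ[k] M}
    (h : ∀ p, f (Finsupp.single p 1) = g (Finsupp.single p 1)) : f = g := by
  apply Finsupp.lhom_ext'
  intro p
  ext
  simpa using h p

noncomputable def gRep (k : Type) [Field k] (Q : GentleData) :
    GentleAlgebra k Q →ₐ[k] (Module.End k (GMod k Q))ᵐᵒᵖ :=
  RingQuot.liftAlgHom k ⟨FreeAlgebra.lift k (fun x => op (gAct k Q x)), by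
    intro x y h
    induction h with
    | idem v =>
      simp only [map_mul, FreeAlgebra.lift_ι_apply, ← op_mul]
      congr 1
      apply gEnd_ext
      intro p
      simp only [Module.End.mul_apply, gAct_single, gStep]
      split_ifs with h
      · simp [gAct_single, gStep, h]
      · simp
    | orth v w h =>
      simp only [map_mul, FreeAlgebra.lift_ι_apply, ← op_mul, map_zero]
      rw [← op_zero]
      congr 1
      apply gEnd_ext
      intro p
      simp only [Module.End.mul_apply, gAct_single, gStep]
      split_ifs with h'
      · simp [gAct_single, gStep, h', h]
      · simp
    | sum_idem =>
      simp only [map_sum, FreeAlgebra.lift_ι_apply, map_one]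
      apply unop_injective
      rw [unop_one]
      change opAddEquiv.symm _ = _
      rw [map_sum]
      apply gEnd_ext
      intro p
      simp [gAct_single, gStep]
    | src_mul a =>
      simp only [map_mul, FreeAlgebra.lift_ι_apply, ← op_mul]
      congr 1
      apply gEnd_ext
      intro p
      simp only [Module.End.mul_apply, gAct_single, gStep]
      split_ifs with h h1 h1
      · simp [gAct_single, gStep, h1]
      · simp [gAct_single, gStep, h1]
      · exact absurd h1.1 h
      · simp
    | mul_tgt a =>
      simp only [map_mul, FreeAlgebra.lift_ι_apply, ← op_mul]
      congr 1
      apply gEnd_ext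
      intro p
      simp only [Module.End.mul_apply, gAct_single, gStep]
      split_ifs with h
      · simp [gAct_single, gStep, gEnd]
      · simp
    | relation a b h =>
      simp only [map_mul, FreeAlgebra.lift_ι_apply, ← op_mul, map_zero]
      rw [← op_zero]
      congr 1
      apply gEnd_ext
      intro p
      simp only [Module.End.mul_apply, gAct_single, gStep]
      split_ifs with h'
      · simp [gAct_single, gStep, gGoodR, h]
      · simp⟩

theorem gRep_ofGen (k : Type) [Field k] (Q : GentleData) (x : GenSym Q) :
    gRep k Q (ofGen k Q x) = op (gAct k Q x) := by
  simp [gRep, ofGen]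

/-! ### Relations in the algebra -/

section rels
variable (k : Type) [Field k] (Q : GentleData)

theorem idem_mul_self (v : Q.V) : idemOf k Q v * idemOf k Q v = idemOf k Q v := by
  have := RingQuot.mkAlgHom_rel k (GentleRel.idem (k := k) v)
  simpa [idemOf, ofGen] using this

theorem idem_mul_ne (v w : Q.V) (h : v ≠ w) : idemOf k Q v * idemOf k Q w = 0 := by
  have := RingQuot.mkAlgHom_rel k (GentleRel.orth (k := k) v w h)
  simpa [idemOf, ofGen] using this

theorem idem_sum : ∑ v : Q.V, idemOf k Q v = 1 := by
  have := RingQuot.mkAlgHom_rel k (GentleRel.sum_idem (k := k) (Q := Q))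
  simpa [idemOf, ofGen] using this

theorem src_mul_arr (a : Q.A) : idemOf k Q (Q.src a) * arrOf k Q a = arrOf k Q a := by
  have := RingQuot.mkAlgHom_rel k (GentleRel.src_mul (k := k) a)
  simpa [idemOf, arrOf, ofGen] using this

theorem arr_mul_tgt (a : Q.A) : arrOf k Q a * idemOf k Q (Q.tgt a) = arrOf k Q a := by
  have := RingQuot.mkAlgHom_rel k (GentleRel.mul_tgt (k := k) a)
  simpa [idemOf, arrOf, ofGen] using this

theorem arr_mul_rel (a b : Q.A) (h : Q.rel a b) : arrOf k Q a * arrOf k Q b = 0 := by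
  have := RingQuot.mkAlgHom_rel k (GentleRel.relation (k := k) a b h)
  simpa [arrOf, ofGen] using this

theorem idem_mul (v w : Q.V) :
    idemOf k Q v * idemOf k Q w = if v = w then idemOf k Q v else 0 := by
  split_ifs with h
  · subst h; exact idem_mul_self k Q v
  · exact idem_mul_ne k Q v w h

theorem idem_mul_arr (v : Q.V) (a : Q.A) :
    idemOf k Q v * arrOf k Q a = if v = Q.src a then arrOf k Q a else 0 := by
  rw [← src_mul_arr k Q a, ← mul_assoc, idem_mul]
  split_ifs with h
  · rw [h]
  · simp

theorem arr_mul_idem (v : Q.V) (a : Q.A) :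
    arrOf k Q a * idemOf k Q v = if Q.tgt a = v then arrOf k Q a else 0 := by
  rw [← arr_mul_tgt k Q a, mul_assoc, idem_mul]
  split_ifs with h
  · rfl
  · simp

theorem arr_mul_arr_ne (a b : Q.A) (h : Q.tgt a ≠ Q.src b) :
    arrOf k Q a * arrOf k Q b = 0 := by
  rw [← arr_mul_tgt k Q a, mul_assoc, idem_mul_arr, if_neg h, mul_zero]

/-- Induction principle for the algebra. -/
theorem gAlg_induction {C : GentleAlgebra k Q → Prop} (x : GentleAlgebra k Q)
    (hk : ∀ r : k, C (algebraMap k _ r)) (hg : ∀ g, C (ofGen k Q g))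
    (hm : ∀ a b, C a → C b → C (a * b)) (ha : ∀ a b, C a → C b → C (a + b)) : C x := by
  obtain ⟨y, rfl⟩ := RingQuot.mkAlgHom_surjective k (GentleRel k Q) x
  induction y using FreeAlgebra.induction with
  | grade0 r => simpa using hk r
  | grade1 g => exact hg g
  | mul a b h1 h2 => rw [map_mul]; exact hm _ _ h1 h2
  | add a b h1 h2 => rw [map_add]; exact ha _ _ h1 h2


/-- The path in the algebra attached to a word. -/
noncomputable def gPath (v : Q.V) : List Q.A → GentleAlgebra k Q
  | [] => idemOf k Q v
  | b :: l => gPath v l * arrOf k Q b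

noncomputable def gPhi : GMod k Q →ₗ[k] GentleAlgebra k Q :=
  Finsupp.linearCombination k (fun p : GWord Q => gPath k Q p.1 p.2)

theorem gPhi_single (p : GWord Q) : gPhi k Q (Finsupp.single p 1) = gPath k Q p.1 p.2 := by
  simp [gPhi]

theorem gPath_mul_idem (v : Q.V) (l : List Q.A) (w : Q.V) :
    gPath k Q v l * idemOf k Q w = if gEnd Q (v, l) = w then gPath k Q v l else 0 := by
  cases l with
  | nil => exact idem_mul k Q v w
  | cons b l =>
    have h : gEnd Q (v, b :: l) = Q.tgt b := rfl
    rw [h, gPath, mul_assoc, arr_mul_idem]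
    split_ifs <;> simp

theorem idem_mul_gPath (w : Q.V) (v : Q.V) (l : List Q.A) :
    idemOf k Q w * gPath k Q v l = if w = v then gPath k Q v l else 0 := by
  induction l with
  | nil =>
    simp only [gPath, idem_mul]
    split_ifs with h
    · rw [h]
    · rfl
  | cons b l ih =>
    simp only [gPath, ← mul_assoc, ih]
    split_ifs <;> simp

theorem gPhi_act_gen (g : GenSym Q) (m : GMod k Q) :
    gPhi k Q (gAct k Q g m) = gPhi k Q m * ofGen k Q g := by
  suffices h : (gPhi k Q) ∘ₗ gAct k Q g = (LinearMap.mulRight k (ofGen k Q g)) ∘ₗ gPhi k Q by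
    exact LinearMap.congr_fun h m
  apply gEnd_ext
  rintro ⟨v, l⟩
  simp only [LinearMap.comp_apply, gAct_single, gPhi_single, LinearMap.mulRight_apply]
  cases g with
  | vertex w =>
    change _ = gPath k Q v l * idemOf k Q w
    rw [gPath_mul_idem]
    simp only [gStep]
    split_ifs
    · rw [gPhi_single]
    · simp
  | arrow a =>
    change _ = gPath k Q v l * arrOf k Q a
    simp only [gStep]
    split_ifs with h
    · rw [gPhi_single]; rfl
    · rw [map_zero]
      cases l with
      | nil =>
        simp only [gGoodR, gEnd] at h
        simp only [gPath, idem_mul_arr]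
        rw [if_neg]
        intro h'
        exact h ⟨h', by simp⟩
      | cons b l =>
        simp only [gPath, mul_assoc]
        by_cases h1 : Q.tgt b = Q.src a
        · by_cases h2 : Q.rel b a
          · rw [arr_mul_rel _ _ _ _ h2, mul_zero]
          · exact absurd ⟨h1, by simpa using h2⟩ h
        · rw [arr_mul_arr_ne _ _ _ _ h1, mul_zero]

theorem gPhi_act (x : GentleAlgebra k Q) (m : GMod k Q) :
    gPhi k Q ((gRep k Q x).unop m) = gPhi k Q m * x := by
  induction x using gAlg_induction generalizing m with
  | hk r =>
    rw [AlgHomClass.commutes]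
    rw [← Algebra.commutes, ← Algebra.smul_def]
    rw [MulOpposite.algebraMap_apply, unop_op, Module.algebraMap_end_apply, map_smul]
  | hg g => rw [gRep_ofGen, unop_op, gPhi_act_gen]
  | hm a b h1 h2 => rw [map_mul, unop_mul, Module.End.mul_apply, h2, h1, mul_assoc]
  | ha a b h1 h2 => rw [map_add, unop_add, LinearMap.add_apply, map_add, h1, h2, mul_add]

/-- The coordinates of an element of the algebra. -/
noncomputable def gPsi (x : GentleAlgebra k Q) : GMod k Q :=
  ∑ v : Q.V, (gRep k Q x).unop (Finsupp.single (v, []) 1)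

theorem gPhi_gPsi (x : GentleAlgebra k Q) : gPhi k Q (gPsi k Q x) = x := by
  simp only [gPsi, map_sum, gPhi_act, gPhi_single, gPath]
  rw [← Finset.sum_mul, idem_sum, one_mul]

theorem gPsi_mul (x y : GentleAlgebra k Q) :
    gPsi k Q (x * y) = (gRep k Q y).unop (gPsi k Q x) := by
  simp [gPsi, map_mul, map_sum]

theorem gPsi_zero : gPsi k Q 0 = 0 := by simp [gPsi]

theorem gPsi_arr (a : Q.A) : gPsi k Q (arrOf k Q a) = Finsupp.single (Q.src a, [a]) 1 := by
  simp only [gPsi, arrOf, gRep_ofGen, unop_op, gAct_single, gStep, gGoodR, gEnd]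
  rw [Finset.sum_eq_single (Q.src a)]
  · simp
  · intro b _ hb
    simp [hb]
  · simp

theorem arr_ne_zero (a : Q.A) : arrOf k Q a ≠ 0 := by
  intro h
  have := gPsi_arr k Q a
  rw [h, gPsi_zero] at this
  exact (Finsupp.single_ne_zero.mpr one_ne_zero) this.symm

/-- Left multiplication by an arrow on words. -/
noncomputable def gLeft (c : Q.A) : Module.End k (GMod k Q) :=
  Finsupp.linearCombination k (fun p : GWord Q =>
    if gGoodL Q c p then Finsupp.single ((Q.src c, p.2 ++ [c]) : GWord Q) (1 : k) else 0)

theorem gLeft_single (c : Q.A) (p : GWord Q) : gLeft k Q c (Finsupp.single p 1) =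
    if gGoodL Q c p then Finsupp.single ((Q.src c, p.2 ++ [c]) : GWord Q) (1 : k) else 0 := by
  simp [gLeft]

theorem gLeft_act_gen (c : Q.A) (g : GenSym Q) (m : GMod k Q) :
    gLeft k Q c (gAct k Q g m) = gAct k Q g (gLeft k Q c m) := by
  suffices h : gLeft k Q c ∘ₗ gAct k Q g = gAct k Q g ∘ₗ gLeft k Q c by
    exact LinearMap.congr_fun h m
  apply gEnd_ext
  rintro ⟨v, l⟩
  simp only [LinearMap.comp_apply, gAct_single, gLeft_single]
  cases g with
  | vertex w =>
    by_cases hL : gGoodL Q c (v, l)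
    · have hE : gEnd Q (Q.src c, l ++ [c]) = gEnd Q (v, l) := by
        cases l with
        | nil => simpa [gEnd] using hL.1.symm
        | cons b l => simp [gEnd]
      rw [if_pos hL, gAct_single]
      simp only [gStep, hE]
      split_ifs
      · rw [gLeft_single, if_pos hL]
      · simp
    · rw [if_neg hL, map_zero]
      simp only [gStep]
      split_ifs
      · rw [gLeft_single, if_neg hL]
      · simp
  | arrow a =>
    cases l with
    | nil =>
      by_cases hv : v = Q.tgt c
      · subst hv
        have hL : gGoodL Q c (Q.tgt c, []) := ⟨rfl, by simp⟩
        rw [if_pos hL, gAct_single]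
        simp only [gStep]
        by_cases hs : Q.tgt c = Q.src a
        · have hR : gGoodR Q a (Q.tgt c, []) := ⟨hs, by simp⟩
          rw [if_pos hR, gLeft_single]
          simp [gGoodL, gGoodR, gEnd, hs]
        · have hR : ¬ gGoodR Q a (Q.tgt c, []) := fun h => hs h.1
          rw [if_neg hR, map_zero]
          simp [gGoodR, gEnd, hs]
      · have hL : ∀ l, ¬ gGoodL Q c (v, l) := fun l h => hv h.1
        rw [if_neg (hL _), map_zero]
        simp only [gStep]
        split_ifs
        · rw [gLeft_single, if_neg (hL _)]
        · simp
    | cons b l =>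
      have h1 : gGoodL Q c (v, a :: b :: l) ↔ gGoodL Q c (v, b :: l) := by
        simp [gGoodL, List.getLast?_cons_cons]
      have h2 : gGoodR Q a (Q.src c, b :: l ++ [c]) ↔ gGoodR Q a (v, b :: l) := by
        simp [gGoodR, gEnd]
      simp only [gStep]
      by_cases hL : gGoodL Q c (v, b :: l) <;> by_cases hR : gGoodR Q a (v, b :: l)
      · rw [if_pos hL, if_pos hR, gLeft_single, if_pos (h1.mpr hL), gAct_single]
        simp only [gStep]
        rw [if_pos (h2.mpr hR)]
        rfl
      · rw [if_pos hL, if_neg hR, map_zero, gAct_single]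
        simp only [gStep]
        rw [if_neg (fun h => hR (h2.mp h))]
      · rw [if_neg hL, if_pos hR, gLeft_single, if_neg (fun h => hL (h1.mp h)), map_zero]
      · rw [if_neg hL, if_neg hR, map_zero, map_zero]

theorem gLeft_act (c : Q.A) (x : GentleAlgebra k Q) (m : GMod k Q) :
    gLeft k Q c ((gRep k Q x).unop m) = (gRep k Q x).unop (gLeft k Q c m) := by
  induction x using gAlg_induction generalizing m with
  | hk r =>
    rw [AlgHomClass.commutes]
    rw [MulOpposite.algebraMap_apply, unop_op, Module.algebraMap_end_apply, map_smul,
      Module.algebraMap_end_apply]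
  | hg g => rw [gRep_ofGen, unop_op, gLeft_act_gen]
  | hm a b h1 h2 => rw [map_mul, unop_mul, Module.End.mul_apply, h2, h1, Module.End.mul_apply]
  | ha a b h1 h2 => rw [map_add, unop_add, LinearMap.add_apply, map_add, h1, h2,
      LinearMap.add_apply]

theorem gLeft_gPsi (c : Q.A) (x : GentleAlgebra k Q) :
    gLeft k Q c (gPsi k Q x) = gPsi k Q (arrOf k Q c * x) := by
  rw [gPsi_mul, gPsi_arr, gPsi, map_sum]
  simp only [gLeft_act, gLeft_single]
  rw [Finset.sum_eq_single (Q.tgt c)]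
  · simp [gGoodL]
  · intro b _ hb
    simp [gGoodL, hb]
  · simp

theorem gKer {P : Type} (T : (P →₀ k) →ₗ[k] (P →₀ k)) (good : P → Prop) (f : P → P)
    (hf : ∀ p q, good p → good q → f p = f q → p = q)
    (hT : ∀ p, T (Finsupp.single p 1) = if good p then Finsupp.single (f p) 1 else 0)
    (m : P →₀ k) (hm : T m = 0) (p : P) (hp : good p) : m p = 0 := by
  have key : ∀ m, T m (f p) = m p := by
    intro m
    induction m using Finsupp.induction_linear with
    | zero => simp
    | add a b h1 h2 => simp [h1, h2]
    | single q r =>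
      have : Finsupp.single q r = r • Finsupp.single q (1 : k) := by simp
      rw [this, map_smul, hT]
      by_cases hq : good q
      · have : f q = f p ↔ q = p := ⟨hf q p hq hp, fun h => h ▸ rfl⟩
        simp [hq, Finsupp.single_apply, this]
      · have : q ≠ p := fun h => hq (h ▸ hp)
        simp [hq, this]
  rw [← key, hm]; rfl

theorem gPhi_mem {S : Submodule k (GentleAlgebra k Q)} (m : GMod k Q)
    (h : ∀ p, m p ≠ 0 → gPath k Q p.1 p.2 ∈ S) : gPhi k Q m ∈ S := by
  rw [gPhi, Finsupp.linearCombination_apply]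
  apply Submodule.sum_mem
  intro p hp
  exact S.smul_mem _ (h p (Finsupp.mem_support_iff.mp hp))

theorem gPath_mem_arr (v : Q.V) (l : List Q.A) (b : Q.A) (hb : b ∈ l.getLast?) :
    ∃ y, idemOf k Q v * (arrOf k Q b * y) = gPath k Q v l := by
  induction l with
  | nil => simp at hb
  | cons a l ih =>
    cases l with
    | nil =>
      simp at hb
      subst hb
      exact ⟨1, by simp [gPath]⟩
    | cons d l =>
      rw [List.getLast?_cons_cons] at hb
      obtain ⟨y, hy⟩ := ih hb
      refine ⟨y * arrOf k Q a, ?_⟩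
      rw [gPath, ← hy]
      simp only [mul_assoc]

theorem left_kernel (c c' : Q.A) (hc : Q.rel c c') (hs : Q.tgt c = Q.src c')
    (huniq : ∀ b, Q.rel c b → b = c')
    (x : GentleAlgebra k Q) (hx : idemOf k Q (Q.tgt c) * x = x) (h0 : arrOf k Q c * x = 0) :
    ∃ y, arrOf k Q c' * y = x := by
  have h1 : gLeft k Q c (gPsi k Q x) = 0 := by rw [gLeft_gPsi, h0, gPsi_zero]
  let S : Submodule k (GentleAlgebra k Q) :=
    Submodule.comap (LinearMap.mulLeft k (idemOf k Q (Q.tgt c)))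
      (LinearMap.range (LinearMap.mulLeft k (arrOf k Q c')))
  have h2 : gPhi k Q (gPsi k Q x) ∈ S := by
    apply gPhi_mem
    rintro ⟨v, l⟩ hp
    change idemOf k Q (Q.tgt c) * gPath k Q v l ∈
      LinearMap.range (LinearMap.mulLeft k (arrOf k Q c'))
    rw [idem_mul_gPath]
    split_ifs with hv
    · have hbad : ¬ gGoodL Q c (v, l) := by
        intro hg
        apply hp
        refine gKer k (gLeft k Q c) (gGoodL Q c) (fun p => (Q.src c, p.2 ++ [c])) ?_ ?_ _ h1
          (v, l) hg
        · rintro ⟨v, l⟩ ⟨v', l'⟩ h h' he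
          have hv : v = v' := h.1.trans h'.1.symm
          simpa [hv] using he
        · intro p
          rw [gLeft_single]
      have : ∃ b ∈ l.getLast?, Q.rel c b := by
        by_contra hcon
        push Not at hcon
        exact hbad ⟨hv.symm, hcon⟩
      obtain ⟨b, hb, hr⟩ := this
      obtain ⟨y, hy⟩ := gPath_mem_arr k Q v l b hb
      refine ⟨y, ?_⟩
      have hbc := huniq b hr
      subst hbc
      rw [LinearMap.mulLeft_apply, ← hy, ← mul_assoc, idem_mul_arr, if_pos (hv ▸ hs)]
    · exact Submodule.zero_mem _
  rw [gPhi_gPsi] at h2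
  obtain ⟨y, hy⟩ := h2
  exact ⟨y, by simpa [hx] using hy⟩

theorem right_kernel (c c' : Q.A)
    (huniq : ∀ b, Q.rel b c → b = c')
    (x : GentleAlgebra k Q) (hx : x * idemOf k Q (Q.src c) = x) (h0 : x * arrOf k Q c = 0) :
    ∃ y, y * arrOf k Q c' = x := by
  have h1 : gAct k Q (GenSym.arrow c) (gPsi k Q x) = 0 := by
    have := gPsi_mul k Q x (arrOf k Q c)
    rw [h0, gPsi_zero, arrOf, gRep_ofGen, unop_op] at this
    exact this.symm
  let S : Submodule k (GentleAlgebra k Q) :=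
    Submodule.comap (LinearMap.mulRight k (idemOf k Q (Q.src c)))
      (LinearMap.range (LinearMap.mulRight k (arrOf k Q c')))
  have h2 : gPhi k Q (gPsi k Q x) ∈ S := by
    apply gPhi_mem
    rintro ⟨v, l⟩ hp
    change gPath k Q v l * idemOf k Q (Q.src c) ∈
      LinearMap.range (LinearMap.mulRight k (arrOf k Q c'))
    rw [gPath_mul_idem]
    split_ifs with hv
    · have hbad : ¬ gGoodR Q c (v, l) := by
        intro hg
        apply hp
        refine gKer k (gAct k Q (GenSym.arrow c)) (gGoodR Q c) (fun p => (p.1, c :: p.2)) ?_ ?_ _ h1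
          (v, l) hg
        · rintro ⟨v, l⟩ ⟨v', l'⟩ _ _ h
          simpa using h
        · intro p
          rw [gAct_single]
          rfl
      have : ∃ b ∈ l.head?, Q.rel b c := by
        by_contra hcon
        push Not at hcon
        exact hbad ⟨hv, hcon⟩
      obtain ⟨b, hb, hr⟩ := this
      cases l with
      | nil => simp at hb
      | cons d l =>
        simp at hb
        subst hb
        have hbc := huniq d hr
        subst hbc
        exact ⟨gPath k Q v l, rfl⟩
    · exact Submodule.zero_mem _
  rw [gPhi_gPsi] at h2
  obtain ⟨y, hy⟩ := h2
  exact ⟨y, by simpa [hx] using hy⟩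

/-! ### The path-length filtration -/

theorem gPath_ne_zero (v : Q.V) (l : List Q.A) (h : gPath k Q v l ≠ 0) :
    ∀ (i : ℕ) (hi : i + 1 < l.length), Q.tgt l[i + 1] = Q.src l[i] ∧ ¬ Q.rel l[i + 1] l[i] := by
  induction l with
  | nil => intro i hi; simp at hi
  | cons a l ih =>
    intro i hi
    cases i with
    | zero =>
      cases l with
      | nil => simp at hi
      | cons b l =>
        simp only [gPath, mul_assoc] at h
        change Q.tgt b = Q.src a ∧ ¬ Q.rel b a
        constructor
        · by_contra hc
          exact h (by rw [arr_mul_arr_ne _ _ _ _ hc, mul_zero])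
        · intro hc
          exact h (by rw [arr_mul_rel _ _ _ _ hc, mul_zero])
    | succ i =>
      have h' : gPath k Q v l ≠ 0 := by
        intro h0
        exact h (by rw [gPath, h0, zero_mul])
      have hi' : i + 1 < l.length := by simpa using hi
      simpa using ih h' i hi'

noncomputable def gFil (n : ℕ) : Submodule k (GentleAlgebra k Q) :=
  Submodule.span k {x | ∃ (v : Q.V) (l : List Q.A), n ≤ l.length ∧ gPath k Q v l = x}

theorem gPath_mem_gFil (n : ℕ) (v : Q.V) (l : List Q.A) (h : n ≤ l.length) :
    gPath k Q v l ∈ gFil k Q n := Submodule.subset_span ⟨v, l, h, rfl⟩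

theorem mem_gFil_zero (x : GentleAlgebra k Q) : x ∈ gFil k Q 0 := by
  rw [← gPhi_gPsi k Q x]
  exact gPhi_mem k Q _ fun p _ => gPath_mem_gFil k Q 0 _ _ (Nat.zero_le _)

theorem gFil_mul_idem (n : ℕ) (x : GentleAlgebra k Q) (hx : x ∈ gFil k Q n) (w : Q.V) :
    x * idemOf k Q w ∈ gFil k Q n := by
  suffices h : gFil k Q n ≤ (gFil k Q n).comap (LinearMap.mulRight k (idemOf k Q w)) from h hx
  refine Submodule.span_le.mpr ?_
  rintro _ ⟨v, l, hl, rfl⟩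
  change gPath k Q v l * idemOf k Q w ∈ gFil k Q n
  rw [gPath_mul_idem]
  split_ifs
  · exact gPath_mem_gFil k Q n _ _ hl
  · exact Submodule.zero_mem _

theorem gFil_mul_arr (n : ℕ) (x : GentleAlgebra k Q) (hx : x ∈ gFil k Q n) (a : Q.A) :
    x * arrOf k Q a ∈ gFil k Q (n + 1) := by
  suffices h : gFil k Q n ≤ (gFil k Q (n + 1)).comap (LinearMap.mulRight k (arrOf k Q a)) from h hx
  refine Submodule.span_le.mpr ?_
  rintro _ ⟨v, l, hl, rfl⟩
  exact gPath_mem_gFil k Q (n + 1) v (a :: l) (by simpa using hl)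

theorem gFil_anti {m n : ℕ} (h : m ≤ n) : gFil k Q n ≤ gFil k Q m := by
  refine Submodule.span_mono ?_
  rintro _ ⟨v, l, hl, rfl⟩
  exact ⟨v, l, h.trans hl, rfl⟩

theorem gFil_mul_path (n : ℕ) (x : GentleAlgebra k Q) (hx : x ∈ gFil k Q n) (w : Q.V)
    (l : List Q.A) : x * gPath k Q w l ∈ gFil k Q (n + l.length) := by
  induction l with
  | nil => exact gFil_mul_idem k Q n x hx w
  | cons a l ih =>
    rw [gPath, ← mul_assoc]
    exact gFil_mul_arr k Q _ _ ih a

theorem gFil_mul (m n : ℕ) (x y : GentleAlgebra k Q) (hx : x ∈ gFil k Q m)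
    (hy : y ∈ gFil k Q n) : x * y ∈ gFil k Q (m + n) := by
  suffices h : gFil k Q n ≤ (gFil k Q (m + n)).comap (LinearMap.mulLeft k x) from h hy
  refine Submodule.span_le.mpr ?_
  rintro _ ⟨v, l, hl, rfl⟩
  exact gFil_anti k Q (Nat.add_le_add_left hl m) (gFil_mul_path k Q m x hx v l)

theorem gFil_pow (x : GentleAlgebra k Q) (hx : x ∈ gFil k Q 1) (n : ℕ) :
    x ^ n ∈ gFil k Q n := by
  induction n with
  | zero => exact mem_gFil_zero k Q _
  | succ n ih => rw [pow_succ]; exact gFil_mul k Q n 1 _ _ ih hx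

theorem gFil_nilpotent (hQ : IsGentle Q) (x : GentleAlgebra k Q) (hx : x ∈ gFil k Q 1) :
    IsNilpotent x := by
  obtain ⟨N, hN⟩ := hQ.2.2.2.2.2.2.2
  refine ⟨N + 1, ?_⟩
  have h1 := gFil_pow k Q x hx (N + 1)
  have h2 : gFil k Q (N + 1) = ⊥ := by
    rw [gFil, Submodule.span_eq_bot]
    rintro _ ⟨v, l, hl, rfl⟩
    by_contra h
    have h3 := gPath_ne_zero k Q v l h
    refine hN (fun i => l[N - i]) ?_
    intro i hi
    have h4 := h3 (N - (i + 1)) (by omega)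
    have h5 : N - (i + 1) + 1 = N - i := by omega
    simpa only [h5] using h4
  rw [h2] at h1
  exact (Submodule.mem_bot k).mp h1

/-- The augmentation at a vertex. -/
noncomputable def gEps (v : Q.V) : GentleAlgebra k Q →ₐ[k] k :=
  RingQuot.liftAlgHom k ⟨FreeAlgebra.lift k (fun x => match x with
    | GenSym.vertex w => if w = v then 1 else 0
    | GenSym.arrow _ => 0), by
    intro x y h
    induction h with
    | idem w => simp
    | orth w u h =>
      simp only [map_mul, FreeAlgebra.lift_ι_apply, map_zero]
      split_ifs with h1 h2
      · exact absurd (h1.trans h2.symm) h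
      all_goals simp
    | sum_idem => simp
    | src_mul a => simp
    | mul_tgt a => simp
    | relation a b h => simp⟩

theorem gEps_idem (v w : Q.V) : gEps k Q v (idemOf k Q w) = if w = v then 1 else 0 := by
  simp [gEps, idemOf, ofGen]

theorem gEps_arr (v : Q.V) (a : Q.A) : gEps k Q v (arrOf k Q a) = 0 := by
  simp [gEps, arrOf, ofGen]

theorem gEps_sub (v : Q.V) (x : GentleAlgebra k Q) :
    idemOf k Q v * x - gEps k Q v x • idemOf k Q v ∈ gFil k Q 1 := by
  let T : GentleAlgebra k Q →ₗ[k] GentleAlgebra k Q :=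
    LinearMap.mulLeft k (idemOf k Q v) - (gEps k Q v).toLinearMap.smulRight (idemOf k Q v)
  suffices h : gFil k Q 0 ≤ (gFil k Q 1).comap T from h (mem_gFil_zero k Q x)
  refine Submodule.span_le.mpr ?_
  rintro _ ⟨w, l, -, rfl⟩
  change idemOf k Q v * gPath k Q w l - gEps k Q v (gPath k Q w l) • idemOf k Q v ∈ gFil k Q 1
  cases l with
  | nil =>
    rw [gPath, gEps_idem, idem_mul]
    by_cases h : v = w
    · simp [h]
    · have : ¬ w = v := fun h' => h h'.symm
      simp [h, this]
  | cons b l =>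
    have : gEps k Q v (gPath k Q w (b :: l)) = 0 := by
      rw [gPath, map_mul, gEps_arr, mul_zero]
    rw [this, zero_smul, sub_zero, idem_mul_gPath]
    split_ifs
    · exact gPath_mem_gFil k Q 1 _ _ (by simp)
    · exact Submodule.zero_mem _

theorem mem_vertexModule (v : Q.V) (x : GentleAlgebra k Q) :
    x ∈ vertexModule k Q v ↔ idemOf k Q v * x = x := by
  rw [vertexModule, Submodule.mem_span_singleton]
  constructor
  · rintro ⟨r, rfl⟩
    change idemOf k Q v * (idemOf k Q v * r.unop) = idemOf k Q v * r.unop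
    rw [← mul_assoc, idem_mul_self]
  · intro h
    exact ⟨op x, h⟩

theorem mem_arrowModule (a : Q.A) (x : GentleAlgebra k Q) :
    x ∈ arrowModule k Q a ↔ ∃ y, arrOf k Q a * y = x := by
  rw [arrowModule, Submodule.mem_span_singleton]
  constructor
  · rintro ⟨r, rfl⟩
    exact ⟨r.unop, rfl⟩
  · rintro ⟨y, rfl⟩
    exact ⟨op y, rfl⟩

theorem idem_mem (v : Q.V) : idemOf k Q v ∈ vertexModule k Q v :=
  (mem_vertexModule k Q v _).mpr (idem_mul_self k Q v)

end rels

/-! ### Local modules -/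

section loc

def IsLocalMod (R : Type) [Ring R] (M : Type) [AddCommGroup M] [Module R M] : Prop :=
  ∃ K : Submodule R M, K ≠ ⊤ ∧ ∀ N : Submodule R M, N ≠ ⊤ → N ≤ K

variable {R : Type} [Ring R] {M P : Type} [AddCommGroup M] [Module R M] [AddCommGroup P]
  [Module R P]

theorem radMod_eq_of_local (K : Submodule R M) (hK : K ≠ ⊤)
    (h : ∀ N : Submodule R M, N ≠ ⊤ → N ≤ K) : radMod R M = K := by
  have hc : IsCoatom K := ⟨hK, fun N hN => by
    by_contra hne
    exact absurd (h N hne) (not_le_of_gt hN)⟩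
  apply le_antisymm
  · exact sInf_le hc
  · refine le_sInf ?_
    intro N hN
    have hle := h N hN.1
    rcases hN.le_iff.mp hle with h1 | h1
    · exact absurd h1 hK
    · exact h1.le

theorem indec_of_local (h : IsLocalMod R M) : IndecomposableModule R M := by
  obtain ⟨K, hK, h⟩ := h
  constructor
  · by_contra hn
    rw [not_nontrivial_iff_subsingleton] at hn
    exact hK (Subsingleton.elim _ _)
  · intro N N' hc
    by_cases h1 : N = ⊤
    · right
      have := hc.inf_eq_bot
      rwa [h1, top_inf_eq] at this
    · by_cases h2 : N' = ⊤
      · left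
        have := hc.inf_eq_bot
        rwa [h2, inf_top_eq] at this
      · exfalso
        apply hK
        rw [eq_top_iff, ← hc.sup_eq_top]
        exact sup_le (h N h1) (h N' h2)

theorem local_quot (f : P →ₗ[R] M) (hf : Function.Surjective f) [Nontrivial M]
    (hP : IsLocalMod R P) :
    IsLocalMod R M ∧ Nonempty (topMod R M ≃ₗ[R] topMod R P) := by
  obtain ⟨K, hK, h⟩ := hP
  have hcomap : ∀ N : Submodule R M, N ≠ ⊤ → N.comap f ≠ ⊤ := by
    intro N hN hc
    apply hN
    rw [← Submodule.map_comap_eq_of_surjective hf N, hc, Submodule.map_top,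
      LinearMap.range_eq_top.mpr hf]
  have hker : LinearMap.ker f ≤ K := h _ (hcomap ⊥ bot_ne_top)
  have hcm : (K.map f).comap f = K := by
    rw [Submodule.comap_map_eq, sup_eq_left]
    exact hker
  have hne : K.map f ≠ ⊤ := by
    intro h1
    rw [h1, Submodule.comap_top] at hcm
    exact hK hcm.symm
  have hloc : ∀ N : Submodule R M, N ≠ ⊤ → N ≤ K.map f := by
    intro N hN
    rw [← Submodule.map_comap_eq_of_surjective hf N]
    exact Submodule.map_mono (h _ (hcomap N hN))
  refine ⟨⟨K.map f, hne, hloc⟩, ?_⟩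
  have hr1 := radMod_eq_of_local K hK h
  have hr2 := radMod_eq_of_local _ hne hloc
  let g : P →ₗ[R] topMod R M := (radMod R M).mkQ ∘ₗ f
  have hg : Function.Surjective g := (Submodule.mkQ_surjective _).comp hf
  have hkg : radMod R P = LinearMap.ker g := by
    rw [LinearMap.ker_comp, Submodule.ker_mkQ, hr1, hr2, hcm]
  exact ⟨((Submodule.quotEquivOfEq _ _ hkg).trans (g.quotKerEquivOfSurjective hg)).symm⟩

end loc

section final

variable (k : Type) [Field k] (Q : GentleData)

theorem vertexModule_local (hQ : IsGentle Q) (v : Q.V) :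
    IsLocalMod (GentleAlgebra k Q)ᵐᵒᵖ ↥(vertexModule k Q v) := by
  let K : Submodule (GentleAlgebra k Q)ᵐᵒᵖ ↥(vertexModule k Q v) :=
    { carrier := {x | gEps k Q v x.1 = 0}
      add_mem' := by
        intro a b ha hb
        change gEps k Q v (a.1 + b.1) = 0
        rw [map_add, ha, hb, add_zero]
      zero_mem' := map_zero _
      smul_mem' := by
        intro r x hx
        change gEps k Q v (x.1 * r.unop) = 0
        rw [map_mul, hx, zero_mul] }
  refine ⟨K, ?_, ?_⟩
  · intro h
    have h1 : (⟨idemOf k Q v, idem_mem k Q v⟩ : vertexModule k Q v) ∈ K := by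
      rw [h]; trivial
    have h2 : gEps k Q v (idemOf k Q v) = 0 := h1
    rw [gEps_idem, if_pos rfl] at h2
    exact one_ne_zero h2
  · intro N hN x hx
    by_contra hne
    have hl : gEps k Q v x.1 ≠ 0 := hne
    apply hN
    have hxe := (mem_vertexModule k Q v _).mp x.2
    set c := gEps k Q v x.1 with hc
    set z := x.1 - c • idemOf k Q v with hz
    have hzn : IsNilpotent z := by
      apply gFil_nilpotent k Q hQ
      have := gEps_sub k Q v x.1
      rwa [hxe] at this
    have hu : IsUnit (algebraMap k (GentleAlgebra k Q) c + z) := by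
      have hcu : IsUnit (algebraMap k (GentleAlgebra k Q) c) :=
        (IsUnit.mk0 c hl).map (algebraMap k (GentleAlgebra k Q))
      exact hzn.isUnit_add_left_of_commute hcu (Algebra.commutes c z).symm
    obtain ⟨u, hu⟩ := hu
    have he : idemOf k Q v * (u : GentleAlgebra k Q) = x.1 := by
      rw [hu, mul_add, ← Algebra.commutes, ← Algebra.smul_def, hz, mul_sub, hxe,
        mul_smul_comm, idem_mul_self]
      abel
    have he2 : x.1 * ((u⁻¹ : (GentleAlgebra k Q)ˣ) : GentleAlgebra k Q) = idemOf k Q v := by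
      rw [← he, mul_assoc, Units.mul_inv, mul_one]
    rw [eq_top_iff]
    rintro y -
    have hy := (mem_vertexModule k Q v _).mp y.2
    have : y = op (((u⁻¹ : (GentleAlgebra k Q)ˣ) : GentleAlgebra k Q) * y.1) • x := by
      apply Subtype.ext
      change y.1 = x.1 * (_ * y.1)
      rw [← mul_assoc, he2, hy]
    rw [this]
    exact N.smul_mem _ hx

/-- Left multiplication as a map of right modules. -/
def lmul {A : Type} [Ring A] (a : A) : A →ₗ[Aᵐᵒᵖ] A where
  toFun x := a * x
  map_add' := mul_add a
  map_smul' r x := (mul_assoc a x r.unop).symm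

theorem arrow_part1 (hQ : IsGentle Q) (a : Q.A) :
    IndecomposableModule (GentleAlgebra k Q)ᵐᵒᵖ ↥(arrowModule k Q a) ∧
      Nonempty (topMod (GentleAlgebra k Q)ᵐᵒᵖ ↥(arrowModule k Q a)
        ≃ₗ[(GentleAlgebra k Q)ᵐᵒᵖ] SimpleAt k Q (Q.tgt a)) := by
  let f : ↥(vertexModule k Q (Q.tgt a)) →ₗ[(GentleAlgebra k Q)ᵐᵒᵖ] ↥(arrowModule k Q a) :=
    (lmul (arrOf k Q a)).restrict (p := vertexModule k Q (Q.tgt a)) (q := arrowModule k Q a)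
      (fun x _ => (mem_arrowModule k Q a _).mpr ⟨x, rfl⟩)
  have hf : Function.Surjective f := by
    rintro ⟨y, hy⟩
    obtain ⟨x, hx⟩ := (mem_arrowModule k Q a _).mp hy
    refine ⟨⟨idemOf k Q (Q.tgt a) * x, (mem_vertexModule k Q _ _).mpr ?_⟩, ?_⟩
    · rw [← mul_assoc, idem_mul_self]
    · apply Subtype.ext
      change arrOf k Q a * (idemOf k Q (Q.tgt a) * x) = y
      rw [← mul_assoc, arr_mul_tgt, hx]
  have hnt : Nontrivial ↥(arrowModule k Q a) := by
    refine ⟨⟨⟨arrOf k Q a, (mem_arrowModule k Q a _).mpr ⟨1, mul_one _⟩⟩, 0, ?_⟩⟩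
    intro h
    exact arr_ne_zero k Q a (congrArg Subtype.val h)
  obtain ⟨h1, h2⟩ := local_quot (M := ↥(arrowModule k Q a))
    (P := ↥(vertexModule k Q (Q.tgt a))) f hf (vertexModule_local k Q hQ (Q.tgt a))
  exact ⟨indec_of_local h1, h2⟩

theorem vertexModule_projective (v : Q.V) :
    Module.Projective (GentleAlgebra k Q)ᵐᵒᵖ ↥(vertexModule k Q v) := by
  let i : ↥(vertexModule k Q v) →ₗ[(GentleAlgebra k Q)ᵐᵒᵖ] (GentleAlgebra k Q)ᵐᵒᵖ :=
    { toFun := fun x => op x.1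
      map_add' := fun _ _ => rfl
      map_smul' := fun _ _ => rfl }
  let s : (GentleAlgebra k Q)ᵐᵒᵖ →ₗ[(GentleAlgebra k Q)ᵐᵒᵖ] ↥(vertexModule k Q v) :=
    { toFun := fun r => ⟨idemOf k Q v * r.unop, (mem_vertexModule k Q v _).mpr (by
        rw [← mul_assoc, idem_mul_self])⟩
      map_add' := fun x y => Subtype.ext (mul_add _ _ _)
      map_smul' := fun r x => Subtype.ext (mul_assoc _ _ _).symm }
  refine Module.Projective.of_split i s ?_
  ext x
  exact (mem_vertexModule k Q v _).mp x.2

theorem gp_of_seq (g : ℤ → Q.A) (hs : ∀ n, Q.tgt (g (n + 1)) = Q.src (g n))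
    (hr : ∀ n, Q.rel (g (n + 1)) (g n))
    (hu1 : ∀ n b, Q.rel (g (n + 1)) b → b = g n)
    (hu2 : ∀ n b, Q.rel b (g n) → b = g (n + 1)) :
    IsGorensteinProjective (GentleAlgebra k Q)ᵐᵒᵖ ↥(arrowModule k Q (g (-1))) := by
  let d : ∀ n : ℤ, ↥(vertexModule k Q (Q.tgt (g n))) →ₗ[(GentleAlgebra k Q)ᵐᵒᵖ]
      ↥(vertexModule k Q (Q.tgt (g (n + 1)))) := fun n =>
    (lmul (arrOf k Q (g n))).restrict (p := vertexModule k Q (Q.tgt (g n)))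
      (q := vertexModule k Q (Q.tgt (g (n + 1))))
      (fun x _ => (mem_vertexModule k Q _ _).mpr (by
        change _ * (arrOf k Q (g n) * x) = arrOf k Q (g n) * x
        rw [hs, ← mul_assoc, src_mul_arr]))
  have hd : ∀ n x, (d n x).1 = arrOf k Q (g n) * x.1 := fun _ _ => rfl
  have hdd : ∀ n x, d (n + 1) (d n x) = 0 := by
    intro n x
    apply Subtype.ext
    rw [hd, hd, ← mul_assoc, arr_mul_rel _ _ _ _ (hr n), zero_mul]
    rfl
  refine ⟨fun n => ModuleCat.of _ ↥(vertexModule k Q (Q.tgt (g n))), d, ?_, ?_, ?_, ?_⟩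
  · intro n
    exact vertexModule_projective k Q _
  · intro n x
    constructor
    · intro h
      have h0 : arrOf k Q (g (n + 1)) * x.1 = 0 := by
        rw [← hd, h]; rfl
      obtain ⟨y, hy⟩ := left_kernel k Q (g (n + 1)) (g n) (hr n) (hs n) (hu1 n) x.1
        ((mem_vertexModule k Q _ _).mp x.2) h0
      refine ⟨⟨idemOf k Q (Q.tgt (g n)) * y, (mem_vertexModule k Q _ _).mpr ?_⟩, ?_⟩
      · rw [← mul_assoc, idem_mul_self]
      · apply Subtype.ext
        rw [hd]
        change arrOf k Q (g n) * (idemOf k Q (Q.tgt (g n)) * y) = _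
        rw [← mul_assoc, arr_mul_tgt, hy]
    · rintro ⟨y, rfl⟩
      exact hdd n y
  · intro n f
    constructor
    · intro h
      change f ∘ₗ d n = 0 at h
      let e : ↥(vertexModule k Q (Q.tgt (g (n + 1)))) := ⟨idemOf k Q _, idem_mem k Q _⟩
      have hfx : ∀ x, f x = op ((f e).unop * x.1) := by
        intro x
        have hx : x = op x.1 • e :=
          Subtype.ext ((mem_vertexModule k Q _ _).mp x.2).symm
        conv_lhs => rw [hx]
        rw [map_smul]
        rfl
      have hy1 : (f e).unop * idemOf k Q (Q.src (g n)) = (f e).unop := by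
        have := hfx e
        rw [← hs n]
        exact (congrArg unop this).symm
      have hy2 : (f e).unop * arrOf k Q (g n) = 0 := by
        let e' : ↥(vertexModule k Q (Q.tgt (g n))) := ⟨idemOf k Q _, idem_mem k Q _⟩
        have h1 : f (d n e') = 0 := LinearMap.congr_fun h e'
        rw [hfx, hd] at h1
        have h2 := congrArg unop h1
        rw [unop_op, arr_mul_tgt] at h2
        exact h2
      obtain ⟨y, hy⟩ := right_kernel k Q (g n) (g (n + 1)) (hu2 n) _ hy1 hy2
      let q : ↥(vertexModule k Q (Q.tgt (g (n + 1 + 1)))) →ₗ[(GentleAlgebra k Q)ᵐᵒᵖ]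
          (GentleAlgebra k Q)ᵐᵒᵖ :=
        { toFun := fun x => op (y * x.1)
          map_add' := fun a b => congrArg op (mul_add y a.1 b.1)
          map_smul' := fun r x => congrArg op (mul_assoc y x.1 r.unop).symm }
      refine ⟨q, ?_⟩
      apply LinearMap.ext
      intro x
      change op (y * (d (n + 1) x).1) = f x
      rw [hd, ← mul_assoc, hy]
      exact (hfx x).symm
    · rintro ⟨q, rfl⟩
      apply LinearMap.ext
      intro x
      change q (d (n + 1) (d n x)) = 0
      rw [hdd, map_zero]
  · let f : ↥(arrowModule k Q (g (-1))) →ₗ[(GentleAlgebra k Q)ᵐᵒᵖ]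
        ↥(LinearMap.range (d (-1))) :=
      { toFun := fun x => ⟨⟨x.1, by
          obtain ⟨y, hy⟩ := (mem_arrowModule k Q _ _).mp x.2
          rw [mem_vertexModule, hs, ← hy, ← mul_assoc, src_mul_arr]⟩, by
          obtain ⟨y, hy⟩ := (mem_arrowModule k Q _ _).mp x.2
          refine ⟨⟨idemOf k Q (Q.tgt (g (-1))) * y, (mem_vertexModule k Q _ _).mpr ?_⟩, ?_⟩
          · rw [← mul_assoc, idem_mul_self]
          · apply Subtype.ext
            rw [hd]
            change arrOf k Q (g (-1)) * (idemOf k Q (Q.tgt (g (-1))) * y) = x.1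
            rw [← mul_assoc, arr_mul_tgt, hy]⟩
        map_add' := fun _ _ => rfl
        map_smul' := fun _ _ => rfl }
    refine ⟨LinearEquiv.ofBijective f ⟨?_, ?_⟩⟩
    · intro x y h
      apply Subtype.ext
      exact congrArg (fun z => z.1.1) h
    · rintro ⟨_, y, rfl⟩
      exact ⟨⟨arrOf k Q (g (-1)) * y.1, (mem_arrowModule k Q _ _).mpr ⟨_, rfl⟩⟩, rfl⟩

theorem arrow_gp (hQ : IsGentle Q) (a : Q.A) (ha : OnOCFCycle Q a) :
    IsGorensteinProjective (GentleAlgebra k Q)ᵐᵒᵖ ↥(arrowModule k Q a) := by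
  obtain ⟨ℓ, -, c, hc, i, rfl⟩ := ha
  obtain ⟨hcomp, -, -, -, hin, -, hout, -⟩ := hQ
  let g : ℤ → Q.A := fun n => c (i - ((n + 1 : ℤ) : ZMod ℓ))
  have hg : ∀ n, g n = c (i - ((n + 1 + 1 : ℤ) : ZMod ℓ) + 1) := by
    intro n
    simp only [g]
    congr 1
    push_cast
    ring
  have hg1 : ∀ n, Q.tgt (g (n + 1)) = Q.src (g n) ∧ Q.rel (g (n + 1)) (g n) := by
    intro n
    rw [hg n]
    exact hc _
  have h0 : g (-1) = c i := by simp [g]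
  rw [← h0]
  refine gp_of_seq k Q g (fun n => (hg1 n).1) (fun n => (hg1 n).2) ?_ ?_
  · intro n b hb
    exact (Set.ncard_le_one (Set.toFinite _)).mp (hout (g (n + 1))) _
      ⟨(hcomp _ _ hb).symm, hb⟩ _ ⟨(hg1 n).1.symm, (hg1 n).2⟩
  · intro n b hb
    exact (Set.ncard_le_one (Set.toFinite _)).mp (hin (g n)) _
      ⟨hcomp _ _ hb, hb⟩ _ (hg1 n)

end final

end Helpers

/-- For an arrow `α` with sink `v` lying on an oriented cycle
with full relations of the gentle algebra `A = kQ/I`, the module `αA` is an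
indecomposable Gorenstein projective module with top isomorphic to the simple
module `S(v)`. In particular two oriented cycles with full relations sharing a
common vertex `v₀` give indecomposable Gorenstein projective modules
`α_h A` and `β_ħ A` with `top(α_h A) ≅ top(β_ħ A) ≅ S(v₀)`. -/
theorem arrowModule_indecomposable_gorensteinProjective_top
    (k : Type) [Field k] [IsAlgClosed k] (Q : GentleData) (hQ : IsGentle Q) :
    (∀ a : Q.A, OnOCFCycle Q a →
      IndecomposableModule (GentleAlgebra k Q)ᵐᵒᵖ ↥(arrowModule k Q a) ∧
      IsGorensteinProjective (GentleAlgebra k Q)ᵐᵒᵖ ↥(arrowModule k Q a) ∧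
      Nonempty (topMod (GentleAlgebra k Q)ᵐᵒᵖ ↥(arrowModule k Q a)
        ≃ₗ[(GentleAlgebra k Q)ᵐᵒᵖ] SimpleAt k Q (Q.tgt a))) ∧
    (∀ (m n : ℕ), 1 ≤ m → 1 ≤ n → ∀ (c : ZMod m → Q.A) (c' : ZMod n → Q.A),
      IsOCFCycle Q c → IsOCFCycle Q c' → ∀ (h : ZMod m) (h' : ZMod n),
      Q.tgt (c h) = Q.tgt (c' h') →
      (IndecomposableModule (GentleAlgebra k Q)ᵐᵒᵖ ↥(arrowModule k Q (c h)) ∧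
       IsGorensteinProjective (GentleAlgebra k Q)ᵐᵒᵖ ↥(arrowModule k Q (c h)) ∧
       IndecomposableModule (GentleAlgebra k Q)ᵐᵒᵖ ↥(arrowModule k Q (c' h')) ∧
       IsGorensteinProjective (GentleAlgebra k Q)ᵐᵒᵖ ↥(arrowModule k Q (c' h')) ∧
       Nonempty (topMod (GentleAlgebra k Q)ᵐᵒᵖ ↥(arrowModule k Q (c h))
         ≃ₗ[(GentleAlgebra k Q)ᵐᵒᵖ] SimpleAt k Q (Q.tgt (c h))) ∧
       Nonempty (topMod (GentleAlgebra k Q)ᵐᵒᵖ ↥(arrowModule k Q (c' h'))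
         ≃ₗ[(GentleAlgebra k Q)ᵐᵒᵖ] SimpleAt k Q (Q.tgt (c h))))) := by
  refine ⟨fun a ha => ⟨(arrow_part1 k Q hQ a).1, arrow_gp k Q hQ a ha,
    (arrow_part1 k Q hQ a).2⟩, ?_⟩
  intro m n hm hn c c' hc hc' h h' hv
  refine ⟨(arrow_part1 k Q hQ _).1, arrow_gp k Q hQ _ ⟨m, hm, c, hc, h, rfl⟩,
    (arrow_part1 k Q hQ _).1, arrow_gp k Q hQ _ ⟨n, hn, c', hc', h', rfl⟩,
    (arrow_part1 k Q hQ _).2, ?_⟩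
  rw [hv]
  exact (arrow_part1 k Q hQ _).2
end
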